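/- arXiv:1603.01986 — 9 statements merged into one kernel-verified Lean document; each statement's English description precedes it below -/
import Mathlib

section
/- For every natural number n and every real number s > -1, the Mellin transform of p_n on [0,1] satisfies ∫₀¹ p_n(x)·x^s dx = (-1)^n · (1/2 - s/2)_n / (s+1)_{n+1}, where (a)_m = a(a+1)⋯(a+m-1) denotes the Pochhammer symbol (rising factorial). -/
open MeasureTheory intervalIntegral

/-- The Pochhammer symbol (rising factorial) `(a)_m = a(a+1)⋯(a+m-1)` over `ℝ`. -/
noncomputable def poch (a : ℝ) (m : ℕ) : ℝ := (ascPochhammer ℝ m).eval a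

/-- The polynomial `p_n(x) = ∑_{k=0}^n (n choose k) ((k/2+1)_n / n!) (-1)^{n-k} x^k`. -/
noncomputable def pAlp (n : ℕ) (x : ℝ) : ℝ :=
  ∑ k ∈ Finset.range (n + 1),
    (n.choose k : ℝ) * (poch ((k : ℝ) / 2 + 1) n / (n.factorial : ℝ)) * (-1) ^ (n - k) * x ^ k

/-!
Integrating termwise, the transform of `∑ₖ aₖ xᵏ` at `s` is `∑ₖ aₖ / (s + 1 + k)`. For `p_n` this
is, up to the factor `(-1)ⁿ`, the partial fraction expansion of `Q(t) / (t)_{n+1}` at `t = s + 1`,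
where `Q(t) = (1 - t/2)_n` has degree at most `n` and takes the values `(k/2 + 1)_n` at the poles
`t = -k`. The expansion itself is Lagrange interpolation of `Q` at `0, -1, …, -n`.
-/

open Polynomial Finset
open scoped Nat

section PartialFractions

theorem ascPochhammer_eval_eq_prod_range {R : Type*} [CommSemiring R] (n : ℕ) (r : R) :
    (ascPochhammer R n).eval r = ∏ j ∈ range n, (r + j) := by
  induction n with
  | zero => simp
  | succ n ih => rw [ascPochhammer_succ_eval, ih, prod_range_succ]

theorem natDegree_ascPochhammer_comp_one_sub_C_mul_X_le {R : Type*} [Ring R]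
    [Nontrivial R] [NoZeroDivisors R] (n : ℕ) (c : R) :
    ((ascPochhammer R n).comp (1 - C c * X)).natDegree ≤ n := by
  have linear : (1 - C c * X).natDegree ≤ 1 := by compute_degree
  calc ((ascPochhammer R n).comp (1 - C c * X)).natDegree
      ≤ (ascPochhammer R n).natDegree * (1 - C c * X).natDegree := natDegree_comp_le
    _ ≤ n * 1 := Nat.mul_le_mul (ascPochhammer_natDegree R n).le linear
    _ = n := mul_one n

theorem prod_range_natCast_sub_self {R : Type*} [CommRing R] (n : ℕ) :
    ∏ j ∈ range n, ((j : R) - n) = (-1) ^ n * n ! := by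
  calc ∏ j ∈ range n, ((j : R) - n)
      = ∏ j ∈ range n, -((n : R) - j) := by simp only [neg_sub]
    _ = (-1) ^ n * n ! := by
      rw [prod_neg, card_range, ← descPochhammer_eval_eq_prod_range,
        descPochhammer_eval_eq_descFactorial, Nat.descFactorial_self]

theorem prod_erase_range_natCast_sub {R : Type*} [CommRing R] {k n : ℕ} (hkn : k ≤ n) :
    ∏ j ∈ (range (n + 1)).erase k, ((j : R) - k) = (-1) ^ k * k ! * (n - k)! := by
  induction n, hkn using Nat.le_induction with
  | base =>
    rw [range_add_one, erase_insert notMem_range_self, prod_range_natCast_sub_self]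
    simp
  | succ n hkn ih =>
    rw [range_add_one, erase_insert_of_ne (by lia), prod_insert (by simp), ih,
      Nat.succ_sub hkn, Nat.factorial_succ]
    push_cast [hkn]
    ring

variable {K : Type*} [Field K]

theorem nodalWeight_range_neg_natCast {k n : ℕ} (hkn : k ≤ n) :
    Lagrange.nodalWeight (range (n + 1)) (fun j : ℕ ↦ -(j : K)) k =
      ((-1 : K) ^ k * k ! * (n - k)!)⁻¹ := by
  rw [Lagrange.nodalWeight, prod_inv_distrib, ← prod_erase_range_natCast_sub hkn]
  simp only [sub_neg_eq_add, neg_add_eq_sub]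

theorem factorial_mul_nodalWeight_range_neg_natCast [CharZero K] {k n : ℕ} (hkn : k ≤ n) :
    (n ! : K) * Lagrange.nodalWeight (range (n + 1)) (fun j : ℕ ↦ -(j : K)) k =
      (-1) ^ k * n.choose k := by
  have sign_inv : ((-1 : K) ^ k)⁻¹ = (-1) ^ k := by rw [← inv_pow, inv_neg_one]
  rw [nodalWeight_range_neg_natCast hkn, Nat.cast_choose K hkn, mul_inv, mul_inv, sign_inv]
  ring

theorem sum_choose_mul_eval_div_add_natCast [CharZero K] {P : K[X]} {n : ℕ}
    (hP : P.natDegree ≤ n) {x : K} (hx : ∀ k ≤ n, x + k ≠ 0) :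
    ∑ k ∈ range (n + 1), (-1) ^ k * n.choose k * P.eval (-(k : K)) / (x + k) =
      n ! * P.eval x / (ascPochhammer K (n + 1)).eval x := by
  have nodes_injective : Function.Injective (fun j : ℕ ↦ -(j : K)) :=
    neg_injective.comp Nat.cast_injective
  have degree_lt : P.degree < #(range (n + 1)) := by
    rw [card_range]
    exact degree_le_of_natDegree_le hP |>.trans_lt (mod_cast n.lt_succ_self)
  have x_ne_node : ∀ k ∈ range (n + 1), x ≠ -(k : K) := fun k hk ↦
    mt eq_neg_iff_add_eq_zero.mp (hx k (mem_range_succ_iff.mp hk))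
  have nodal_eval : (Lagrange.nodal (range (n + 1)) fun j : ℕ ↦ -(j : K)).eval x =
      (ascPochhammer K (n + 1)).eval x := by
    simp only [Lagrange.eval_nodal, ascPochhammer_eval_eq_prod_range, sub_neg_eq_add]
  have pochhammer_ne_zero : (ascPochhammer K (n + 1)).eval x ≠ 0 :=
    nodal_eval ▸ Lagrange.eval_nodal_not_at_node x_ne_node
  have interpolation := congrArg (eval x)
    (Lagrange.eq_interpolate nodes_injective.injOn degree_lt)
  rw [Lagrange.eval_interpolate_not_at_node _ x_ne_node, nodal_eval] at interpolation
  rw [interpolation, mul_left_comm, mul_div_cancel_left₀ _ pochhammer_ne_zero, mul_sum]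
  refine sum_congr rfl fun k hk ↦ ?_
  rw [← factorial_mul_nodalWeight_range_neg_natCast (mem_range_succ_iff.mp hk), sub_neg_eq_add]
  ring

theorem sum_choose_mul_ascPochhammer_div_add_natCast [CharZero K] (n : ℕ) (c : K) {x : K}
    (hx : ∀ k ≤ n, x + k ≠ 0) :
    ∑ k ∈ range (n + 1),
        (-1) ^ k * n.choose k * (ascPochhammer K n).eval (1 + c * k) / (x + k) =
      n ! * (ascPochhammer K n).eval (1 - c * x) / (ascPochhammer K (n + 1)).eval x := by
  simpa using sum_choose_mul_eval_div_add_natCast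
    (natDegree_ascPochhammer_comp_one_sub_C_mul_X_le n c) hx

end PartialFractions

theorem integral_sum_mul_pow_mul_rpow (S : Finset ℕ) (a : ℕ → ℝ) {s : ℝ} (hs : -1 < s) :
    ∫ x in (0 : ℝ)..1, (∑ k ∈ S, a k * x ^ k) * x ^ s = ∑ k ∈ S, a k / (s + 1 + k) := by
  have exponent_gt (k : ℕ) : -1 < s + k := by linarith [k.cast_nonneg (α := ℝ)]
  have monomial_integral (k : ℕ) : ∫ x in (0 : ℝ)..1, x ^ (s + k) = 1 / (s + 1 + k) := by
    rw [integral_rpow (.inl (exponent_gt k)), Real.one_rpow,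
      Real.zero_rpow (by linarith [exponent_gt k]), sub_zero, add_right_comm]
  calc ∫ x in (0 : ℝ)..1, (∑ k ∈ S, a k * x ^ k) * x ^ s
      = ∫ x in (0 : ℝ)..1, ∑ k ∈ S, a k * x ^ (s + k) := by
        refine integral_congr_ae (.of_forall fun x hx ↦ ?_)
        have x_pos : 0 < x := (Set.uIoc_of_le (zero_le_one' ℝ) ▸ hx).1
        simp only [sum_mul, Real.rpow_add x_pos, Real.rpow_natCast, mul_assoc,
          mul_comm (x ^ s)]
    _ = ∑ k ∈ S, ∫ x in (0 : ℝ)..1, a k * x ^ (s + k) :=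
        intervalIntegral.integral_finsetSum fun k _ ↦
          (intervalIntegrable_rpow' (exponent_gt k)).const_mul _
    _ = ∑ k ∈ S, a k / (s + 1 + k) := by
        simp only [intervalIntegral.integral_const_mul, monomial_integral, mul_one_div]

theorem neg_one_pow_sub_eq_mul {R : Type*} [Ring R] {k n : ℕ} (hkn : k ≤ n) :
    (-1 : R) ^ (n - k) = (-1) ^ n * (-1) ^ k := by
  rw [← pow_add, neg_one_pow_congr]
  simp only [Nat.even_sub hkn, Nat.even_add]

/-- Mellin transform of `p_n` on `[0,1]`:
`∫₀¹ p_n(x) x^s dx = (-1)^n (1/2 - s/2)_n / (s+1)_{n+1}` for `s > -1`. -/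
theorem mellin_pAlp (n : ℕ) (s : ℝ) (hs : -1 < s) :
    ∫ x in (0 : ℝ)..1, pAlp n x * x ^ s =
      (-1) ^ n * poch (1 / 2 - s / 2) n / poch (s + 1) (n + 1) := by
  have denominator_ne_zero : ∀ k ≤ n, s + 1 + k ≠ 0 := fun k _ ↦ by
    linarith [k.cast_nonneg (α := ℝ)]
  calc ∫ x in (0 : ℝ)..1, pAlp n x * x ^ s
      = ∑ k ∈ range (n + 1),
          n.choose k * (poch (k / 2 + 1) n / n !) * (-1) ^ (n - k) / (s + 1 + k) :=
        integral_sum_mul_pow_mul_rpow _ _ hs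
    _ = (-1) ^ n / n ! * ∑ k ∈ range (n + 1),
          (-1) ^ k * n.choose k * poch (1 + 1 / 2 * k) n / (s + 1 + k) := by
        rw [mul_sum]
        refine sum_congr rfl fun k hk ↦ ?_
        rw [neg_one_pow_sub_eq_mul (mem_range_succ_iff.mp hk),
          show (k : ℝ) / 2 + 1 = 1 + 1 / 2 * k by ring]
        ring
    _ = (-1) ^ n / n ! * (n ! * poch (1 - 1 / 2 * (s + 1)) n / poch (s + 1) (n + 1)) :=
        congrArg _ (sum_choose_mul_ascPochhammer_div_add_natCast n (1 / 2) denominator_ne_zero)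
    _ = (-1) ^ n * poch (1 / 2 - s / 2) n / poch (s + 1) (n + 1) := by
        rw [show 1 - 1 / 2 * (s + 1) = 1 / 2 - s / 2 by ring]
        field_simp
end

section
/- For every natural number n ≥ 1 and every integer j with 1 ≤ j ≤ n, the odd moment ∫₀¹ p_n(x)·x^{2j-1} dx = 0. In other words, all odd moments of p_n on [0,1] of order at most 2n-1 vanish. -/
open MeasureTheory intervalIntegral

/-!
Up to the sign `(-1)^(n-k)` and the factor `n.choose k`, the coefficients of `p_n` are the values
at `k` of the polynomial `Q(t) = binom(n + t/2, n)` of degree `n`, whose roots are `-2, -4, …, -2n`.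
Integrating `x^k * x^(2j-1)` divides the `k`-th coefficient by `k + 2j`, and `Q(t) / (t + 2j)` is
again a polynomial, now of degree `n - 1`. The moment is therefore an `n`-th finite difference of a
polynomial of degree less than `n`.
-/

open Polynomial Finset

theorem sum_neg_one_pow_mul_choose_mul_eval_eq_zero {R : Type*} [CommRing R] {P : R[X]} {n : ℕ}
    (hP : P.natDegree < n) :
    ∑ k ∈ range (n + 1), (-1) ^ (n - k) * (n.choose k : R) * P.eval (k : R) = 0 := by
  have hdiff := congrFun (fwdDiff_iter_eq_zero_of_degree_lt hP) 0
  simpa [fwdDiff_iter_eq_sum_shift] using hdiff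

theorem sum_neg_one_pow_mul_choose_mul_eval_div_eq_zero {K : Type*} [Field K] {Q : K[X]} {n : ℕ}
    {a : K} (hdeg : Q.natDegree ≤ n) (hroot : Q.IsRoot a) (ha : ∀ k ≤ n, (k : K) ≠ a) :
    ∑ k ∈ range (n + 1), (-1) ^ (n - k) * (n.choose k : K) * (Q.eval (k : K) / (k - a)) = 0 := by
  rcases eq_or_ne Q 0 with rfl | hQ
  · simp
  have hquot_deg : (Q /ₘ (X - C a)).natDegree < n := by
    have hpos : 0 < Q.natDegree := natDegree_pos_iff_degree_pos.2 (degree_pos_of_root hQ hroot)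
    rw [natDegree_divByMonic Q (monic_X_sub_C a), natDegree_X_sub_C]
    lia
  have hquot_eval (k : ℕ) (hk : k ≤ n) :
      Q.eval (k : K) / (k - a) = (Q /ₘ (X - C a)).eval (k : K) := by
    rw [div_eq_iff (sub_ne_zero.2 (ha k hk)), mul_comm]
    conv_lhs => rw [← mul_divByMonic_eq_iff_isRoot.2 hroot]
    simp
  rw [← sum_neg_one_pow_mul_choose_mul_eval_eq_zero hquot_deg]
  exact sum_congr rfl fun k hk ↦ by rw [hquot_eval k (mem_range_succ_iff.1 hk)]

theorem integral_sum_mul_pow_mul_pow (s : Finset ℕ) (c : ℕ → ℝ) (m : ℕ) :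
    ∫ x in (0 : ℝ)..1, (∑ k ∈ s, c k * x ^ k) * x ^ m = ∑ k ∈ s, c k / (k + m + 1) := by
  simp only [sum_mul, mul_assoc, ← pow_add]
  rw [integral_finsetSum fun k _ ↦ Continuous.intervalIntegrable (by fun_prop) _ _]
  simp [integral_pow, div_eq_mul_inv]

/-- The generalized binomial coefficient `binom(n + t/2, n)` as a polynomial in `t`; its values at
`t = 0, …, n` are the unsigned coefficients of `pAlp n` without the factor `n.choose k`. -/
noncomputable def halfBinomial (n : ℕ) : ℝ[X] :=
  C (n.factorial : ℝ)⁻¹ * (ascPochhammer ℝ n).comp (C (1 / 2) * X + C 1)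

theorem eval_halfBinomial (n : ℕ) (t : ℝ) :
    (halfBinomial n).eval t = poch (t / 2 + 1) n / n.factorial := by
  simp [halfBinomial, poch, div_eq_inv_mul]

theorem natDegree_halfBinomial_le (n : ℕ) : (halfBinomial n).natDegree ≤ n := by
  calc (halfBinomial n).natDegree
      ≤ ((ascPochhammer ℝ n).comp (C (1 / 2) * X + C 1)).natDegree := natDegree_C_mul_le _ _
    _ ≤ (ascPochhammer ℝ n).natDegree * (C (1 / 2 : ℝ) * X + C 1).natDegree := natDegree_comp_le
    _ ≤ n * 1 := Nat.mul_le_mul (ascPochhammer_natDegree ℝ n).le natDegree_linear_le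
    _ = n := mul_one n

theorem isRoot_halfBinomial {n j : ℕ} (hj1 : 1 ≤ j) (hj2 : j ≤ n) :
    (halfBinomial n).IsRoot (-(2 * j)) := by
  have harg : -(2 * (j : ℝ)) / 2 + 1 = -((j - 1 : ℕ) : ℝ) := by
    push_cast [hj1]
    ring
  rw [IsRoot.def, eval_halfBinomial, harg, poch,
    ascPochhammer_eval_neg_coe_nat_of_lt (by lia), zero_div]

theorem pAlp_eq_sum_eval_halfBinomial (n : ℕ) (x : ℝ) :
    pAlp n x = ∑ k ∈ range (n + 1),
      (-1) ^ (n - k) * (n.choose k : ℝ) * (halfBinomial n).eval (k : ℝ) * x ^ k := by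
  simp only [pAlp, eval_halfBinomial]
  exact sum_congr rfl fun k _ ↦ by ring

/-- All odd moments of `p_n` on `[0,1]` of order at most `2n-1` vanish. -/
theorem pAlp_odd_moments (n : ℕ) (hn : 1 ≤ n) (j : ℕ) (hj1 : 1 ≤ j) (hj2 : j ≤ n) :
    ∫ x in (0 : ℝ)..1, pAlp n x * x ^ (2 * j - 1) = 0 := by
  have hdenom (k : ℕ) : (k : ℝ) + (2 * j - 1 : ℕ) + 1 = k - -(2 * j) := by
    push_cast [show 1 ≤ 2 * j by lia]
    ring
  have hne (k : ℕ) (_ : k ≤ n) : (k : ℝ) ≠ -(2 * j) := by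
    have : (0 : ℝ) < j := by exact_mod_cast hj1
    have : (0 : ℝ) ≤ k := k.cast_nonneg
    linarith
  simp only [pAlp_eq_sum_eval_halfBinomial, integral_sum_mul_pow_mul_pow, hdenom, mul_div_assoc]
  exact sum_neg_one_pow_mul_choose_mul_eval_div_eq_zero (natDegree_halfBinomial_le n)
    (isRoot_halfBinomial hj1 hj2) hne
end

section
/- Rodrigues-type formula for p_n: for every natural number n and every real x > 0, p_n(x) = ((-1)^n / (2^n · n!)) · (D*)^n [x^{2n}(1-x)^n](x), where D* is the operator (D*f)(x) = f'(x)/x and (D*)^n denotes its n-fold iteration applied to the function x ↦ x^{2n}(1-x)^n. -/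
open MeasureTheory intervalIntegral

/-- The differential operator `D* f = f' / x`. -/
noncomputable def Dstar (f : ℝ → ℝ) : ℝ → ℝ := fun x => deriv f x / x

/-!
Away from the origin `D*` acts on monomials by `D* y ^ (k + 2) = (k + 2) y ^ k`, so applying it `j`
times to `y ^ (k + 2 * j)` produces the coefficient `∏ (k + 2 * i) = 2 ^ j (k / 2 + 1)_j`, the
product running over `1 ≤ i ≤ j`. Expanding `(1 - y) ^ n` by the binomial theorem and applying this
with `j = n` to every term gives `p_n`.
-/

theorem poch_succ_left (a : ℝ) (m : ℕ) : poch a (m + 1) = a * poch (a + 1) m := by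
  simp [poch, ascPochhammer_succ_left]

theorem eqOn_dstar {f g : ℝ → ℝ} {s : Set ℝ} (hs : IsOpen s) (hfg : Set.EqOn f g s) :
    Set.EqOn (Dstar f) (Dstar g) s := fun x hx =>
  congrArg (· / x) (hfg.deriv hs hx)

section SumOfMonomials

variable {ι : Type*} (s : Finset ι) (c : ι → ℝ) (k : ι → ℕ)

theorem dstar_sum_mul_pow {x : ℝ} (hx : x ≠ 0) :
    Dstar (fun y => ∑ i ∈ s, c i * y ^ (k i + 2)) x = ∑ i ∈ s, c i * (k i + 2) * x ^ k i := by
  have hderiv : HasDerivAt (fun y => ∑ i ∈ s, c i * y ^ (k i + 2))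
      (∑ i ∈ s, c i * ((k i + 2 : ℕ) * x ^ (k i + 1))) x :=
    HasDerivAt.fun_sum fun i _ => (hasDerivAt_pow (k i + 2) x).const_mul (c i)
  rw [Dstar, hderiv.deriv, Finset.sum_div]
  refine Finset.sum_congr rfl fun i _ => ?_
  rw [div_eq_iff hx]
  push_cast
  ring

theorem iterate_dstar_sum_mul_pow (j : ℕ) {x : ℝ} (hx : x ≠ 0) :
    Dstar^[j] (fun y => ∑ i ∈ s, c i * y ^ (k i + 2 * j)) x =
      2 ^ j * ∑ i ∈ s, c i * poch (k i / 2 + 1) j * x ^ k i := by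
  induction j generalizing k x with
  | zero => simp [poch]
  | succ j ih =>
    have hinner : Set.EqOn (Dstar^[j] fun y => ∑ i ∈ s, c i * y ^ (k i + 2 * (j + 1)))
        (fun y => ∑ i ∈ s, 2 ^ j * (c i * poch ((k i + 2 : ℕ) / 2 + 1) j) * y ^ (k i + 2))
        {0}ᶜ := fun y hy => by
      have hexp (i : ι) : k i + 2 * (j + 1) = k i + 2 + 2 * j := by ring
      simp only [hexp, ih (fun i => k i + 2) hy, Finset.mul_sum, mul_assoc]
    rw [Function.iterate_succ_apply', eqOn_dstar isOpen_compl_singleton hinner hx,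
      dstar_sum_mul_pow s _ k hx, Finset.mul_sum]
    refine Finset.sum_congr rfl fun i _ => ?_
    have harg : ((k i + 2 : ℕ) : ℝ) / 2 + 1 = k i / 2 + 1 + 1 := by
      push_cast
      ring
    rw [harg, poch_succ_left]
    ring

end SumOfMonomials

theorem pow_mul_one_sub_pow {R : Type*} [CommRing R] (m n : ℕ) (y : R) :
    y ^ m * (1 - y) ^ n = ∑ k ∈ Finset.range (n + 1), n.choose k * (-1) ^ k * y ^ (k + m) := by
  rw [sub_eq_neg_add, add_pow, Finset.mul_sum]
  refine Finset.sum_congr rfl fun k _ => ?_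
  rw [neg_pow y k, one_pow]
  ring

theorem pAlp_eq_mul_sum (n : ℕ) (x : ℝ) :
    pAlp n x = (-1) ^ n / (n.factorial : ℝ) * ∑ k ∈ Finset.range (n + 1),
      n.choose k * (-1) ^ k * poch (k / 2 + 1) n * x ^ k := by
  rw [pAlp, Finset.mul_sum]
  refine Finset.sum_congr rfl fun k hk => ?_
  have hsign : (-1 : ℝ) ^ (n - k) = (-1) ^ n * (-1) ^ k := by
    rw [pow_sub₀ _ (by norm_num) (Finset.mem_range_succ_iff.mp hk), ← inv_pow, inv_neg_one]
  rw [hsign]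
  ring

theorem rodrigues_pAlp_general (n : ℕ) {x : ℝ} (hx : x ≠ 0) :
    pAlp n x = ((-1) ^ n / (2 ^ n * (n.factorial : ℝ))) *
      (Dstar^[n] (fun y : ℝ => y ^ (2 * n) * (1 - y) ^ n)) x := by
  simp only [pow_mul_one_sub_pow]
  rw [iterate_dstar_sum_mul_pow _ _ (fun k => k) n hx, pAlp_eq_mul_sum]
  field_simp

/-- Rodrigues-type formula: `p_n(x) = ((-1)^n / (2^n n!)) (D*)^n [x^{2n}(1-x)^n](x)` for `x > 0`. -/
theorem rodrigues_pAlp (n : ℕ) (x : ℝ) (hx : 0 < x) :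
    pAlp n x = ((-1) ^ n / (2 ^ n * (n.factorial : ℝ))) *
      (Dstar^[n] (fun y : ℝ => y ^ (2 * n) * (1 - y) ^ n)) x :=
  rodrigues_pAlp_general n hx.ne'
end

section
/- For every natural number n ≥ 1 and every real x, the recurrence (3n-1)·x·p_{n-1}(x) = 2n·q_n(x) + (2n-1)·q_{n-1}(x) holds as an identity of polynomials. -/
open MeasureTheory intervalIntegral

/-- The polynomial `q_n(x) = ∑_{k=0}^n (n choose k) (((k+1)/2)_n / n!) (-1)^{n-k} x^k`. -/
noncomputable def qAlp (n : ℕ) (x : ℝ) : ℝ :=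
  ∑ k ∈ Finset.range (n + 1),
    (n.choose k : ℝ) * (poch (((k : ℝ) + 1) / 2) n / (n.factorial : ℝ)) * (-1) ^ (n - k) * x ^ k

/-!
Both families are specialisations of `F_n(d, b) = ∑ k, [X^k] (X - 1)^n * (dk + b)_n / n! * X^k`,
namely `p_n = F_n(1/2, 1)` and `q_n = F_n(1/2, 1/2)`. Multiplying by `X` shifts `k` by one, so the
coefficients of `X * F_n(d, b + d)`, `F_n(d, b)` and `F_{n+1}(d, b)` at `X^(k+1)` all involve the
same base `d(k + 1) + b`, and `(n + 1) * (a)_{n+1} / (n+1)! = (a + n) * (a)_n / n!` removes the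
Pochhammer symbols. What is left is a linear relation between coefficients of powers of `X - 1`,
which follows from Pascal's rule and from `(X - 1) * ((X - 1)^n)' = n * (X - 1)^n`.
-/

open Polynomial

theorem mul_derivative_pow {R : Type*} [CommSemiring R] (p : R[X]) (n : ℕ) :
    p * derivative (p ^ n) = C (n : R) * p ^ n * derivative p := by
  cases n with
  | zero => simp
  | succ n =>
    rw [derivative_pow_succ, Nat.cast_succ]
    ring

section CoeffXSubOnePow

variable {R : Type*} [CommRing R]

theorem coeff_zero_X_sub_one_pow_succ (n : ℕ) :
    ((X - 1 : R[X]) ^ (n + 1)).coeff 0 = -((X - 1 : R[X]) ^ n).coeff 0 := by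
  simp [pow_succ]

theorem coeff_succ_X_sub_one_pow_succ (n k : ℕ) :
    ((X - 1 : R[X]) ^ (n + 1)).coeff (k + 1) =
      ((X - 1 : R[X]) ^ n).coeff k - ((X - 1 : R[X]) ^ n).coeff (k + 1) := by
  rw [pow_succ, mul_sub, mul_one, coeff_sub, coeff_mul_X]

theorem coeff_succ_X_sub_one_pow_mul (n k : ℕ) :
    ((X - 1 : R[X]) ^ n).coeff (k + 1) * (k + 1) = (k - n) * ((X - 1 : R[X]) ^ n).coeff k := by
  have hderiv : (X - 1 : R[X]) * derivative ((X - 1) ^ n) = C (n : R) * (X - 1) ^ n := by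
    rw [mul_derivative_pow, derivative_sub, derivative_X, derivative_one, sub_zero, mul_one]
  have hcoeff := congrArg (coeff · k) hderiv
  have hXmul : (X * derivative ((X - 1 : R[X]) ^ n)).coeff k =
      ((X - 1 : R[X]) ^ n).coeff k * k := by
    cases k <;> simp [coeff_X_mul, coeff_derivative]
  simp only [sub_mul, one_mul, coeff_sub, hXmul, coeff_derivative, coeff_C_mul] at hcoeff
  linear_combination -hcoeff

theorem coeff_X_sub_one_pow (n k : ℕ) :
    ((X - 1 : R[X]) ^ n).coeff k = n.choose k * (-1) ^ (n - k) := by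
  rw [sub_eq_add_neg, ← C_1, ← C_neg, coeff_X_add_C_pow, mul_comm]

end CoeffXSubOnePow

theorem succ_mul_multichoose_succ {R : Type*} [CommRing R] [BinomialRing R] (a : R) (n : ℕ) :
    (n + 1) * Ring.multichoose a (n + 1) = (a + n) * Ring.multichoose a n := by
  have : IsAddTorsionFree R := BinomialRing.toIsAddTorsionFree
  apply nsmul_right_injective n.factorial_ne_zero
  have hsucc := Ring.factorial_nsmul_multichoose_eq_ascPochhammer a (n + 1)
  have hself := Ring.factorial_nsmul_multichoose_eq_ascPochhammer a n
  rw [ascPochhammer_smeval_eq_eval, nsmul_eq_mul] at hsucc hself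
  rw [ascPochhammer_succ_eval, ← hself, Nat.factorial_succ] at hsucc
  push_cast at hsucc
  simp only [nsmul_eq_mul]
  linear_combination hsucc

theorem multichoose_eq_poch_div_factorial (a : ℝ) (n : ℕ) :
    Ring.multichoose a n = poch a n / n.factorial := by
  rw [eq_div_iff (mod_cast n.factorial_ne_zero), mul_comm, ← nsmul_eq_mul,
    Ring.factorial_nsmul_multichoose_eq_ascPochhammer, ascPochhammer_smeval_eq_eval, poch]

section MultichoosePoly

variable {R : Type*} [CommRing R] [BinomialRing R]

/-- The common generalisation of `p_n` and `q_n`: each coefficient of `(X - 1) ^ n` is weighted by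
`(dk + b)_n / n!`, where `k` is its degree. `Ring.multichoose` plays the role of the quotient, so
no division is needed in `R`. -/
noncomputable def multichoosePoly (d b : R) (n : ℕ) : R[X] :=
  ∑ k ∈ Finset.range (n + 1),
    monomial k (((X - 1 : R[X]) ^ n).coeff k * Ring.multichoose (d * k + b) n)

theorem coeff_multichoosePoly (d b : R) (n k : ℕ) :
    (multichoosePoly d b n).coeff k =
      ((X - 1 : R[X]) ^ n).coeff k * Ring.multichoose (d * k + b) n := by
  rw [multichoosePoly, finsetSum_coeff]
  simp only [coeff_monomial, Finset.sum_ite_eq', Finset.mem_range]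
  split_ifs with hk
  · rfl
  · rw [coeff_X_sub_one_pow, Nat.choose_eq_zero_of_lt (by lia)]
    simp

theorem rec_x_pAlp_general (d b : R) (n : ℕ) :
    C (b + d + (1 + d) * n) * (X * multichoosePoly d (b + d) n) =
      C (n + 1 : R) * multichoosePoly d b (n + 1) + C (n + b) * multichoosePoly d b n := by
  ext k
  simp only [coeff_add, coeff_C_mul, coeff_multichoosePoly]
  cases k with
  | zero =>
    rw [mul_coeff_zero, coeff_X_zero, coeff_zero_X_sub_one_pow_succ, Nat.cast_zero, mul_zero,
      zero_add]
    linear_combination ((X - 1 : R[X]) ^ n).coeff 0 * succ_mul_multichoose_succ b n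
  | succ k =>
    have hbase : d * (k : R) + (b + d) = d * (k + 1) + b := by ring
    rw [coeff_X_mul, coeff_multichoosePoly, coeff_succ_X_sub_one_pow_succ, Nat.cast_succ, hbase]
    linear_combination
      d * Ring.multichoose (d * (k + 1) + b) n * coeff_succ_X_sub_one_pow_mul (R := R) n k -
        (((X - 1 : R[X]) ^ n).coeff k - ((X - 1 : R[X]) ^ n).coeff (k + 1)) *
          succ_mul_multichoose_succ (d * (k + 1) + b) n

end MultichoosePoly

theorem eval_multichoosePoly (d b : ℝ) (n : ℕ) (x : ℝ) :
    (multichoosePoly d b n).eval x = ∑ k ∈ Finset.range (n + 1),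
      (n.choose k : ℝ) * (poch (d * k + b) n / n.factorial) * (-1) ^ (n - k) * x ^ k := by
  simp only [multichoosePoly, eval_finsetSum, eval_monomial, coeff_X_sub_one_pow,
    multichoose_eq_poch_div_factorial]
  exact Finset.sum_congr rfl fun k _ => by ring

theorem pAlp_eq_eval_multichoosePoly (n : ℕ) (x : ℝ) :
    pAlp n x = (multichoosePoly (1 / 2) 1 n).eval x := by
  simp only [pAlp, eval_multichoosePoly, one_div_mul_eq_div]

theorem qAlp_eq_eval_multichoosePoly (n : ℕ) (x : ℝ) :
    qAlp n x = (multichoosePoly (1 / 2) (1 / 2) n).eval x := by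
  simp only [qAlp, eval_multichoosePoly, one_div_mul_eq_div, add_div]

/-- Recurrence `(3n-1) x p_{n-1}(x) = 2n q_n(x) + (2n-1) q_{n-1}(x)` for `n ≥ 1`. -/
theorem rec_x_pAlp (n : ℕ) (hn : 1 ≤ n) (x : ℝ) :
    (3 * (n : ℝ) - 1) * x * pAlp (n - 1) x =
      2 * (n : ℝ) * qAlp n x + (2 * (n : ℝ) - 1) * qAlp (n - 1) x := by
  obtain ⟨m, rfl⟩ := Nat.exists_eq_add_of_le' hn
  have hrec := congrArg (eval x) (rec_x_pAlp_general (1 / 2 : ℝ) (1 / 2) m)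
  simp only [add_halves, eval_add, eval_mul, eval_C, eval_X,
    ← pAlp_eq_eval_multichoosePoly, ← qAlp_eq_eval_multichoosePoly] at hrec
  push_cast [Nat.add_sub_cancel]
  linear_combination 2 * hrec
end

section
/- For every natural number n ≥ 2 and every real x, the recurrence (3n-2)·x·q_{n-1}(x) = (2/3)·( n·p_n(x) + (2n-1)·p_{n-1}(x) + (n-1)·p_{n-2}(x) ) holds as an identity of polynomials. -/
open MeasureTheory intervalIntegral

/-!
Both families sit in a one-parameter family in which `1/2` is replaced by `t`. With `a = t k`, the
coefficient of `x ^ k` in `n p_n + (2n-1) p_{n-1} + (n-1) p_{n-2}` is, up to sign,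
`(n choose k) (a+1)_{n-2} / n!` times
`n (a+n-1) (a+n) - (2n-1) (n-k) (a+n-1) + (n-1) (n-k) (n-k-1)`.
The constant and linear terms in `k` cancel, leaving `(t+1) (n (t+1) - 1) k ^ 2`. One factor `k`
turns `n choose k` into `n ((n-1) choose (k-1))`; the other, multiplied by `t`, turns `(a+1)_{n-2}`
into `(a)_{n-1}`. The result is a multiple of the coefficient of `x ^ k` in `x q_{n-1}`.
-/

section General

open Polynomial

variable {K : Type*} [Field K]

/-- The polynomial `∑_{k=0}^n (n choose k) ((t k + s)_n / n!) (-1)^{n-k} X^k`, a common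
generalization of `p_n` (`t = 1/2`, `s = 1`) and `q_n` (`t = s = 1/2`). -/
noncomputable def alpPoly (t s : K) (n : ℕ) : K[X] :=
  ∑ k ∈ Finset.range (n + 1),
    monomial k ((n.choose k : K) * ((ascPochhammer K n).eval (t * k + s) / n.factorial)
      * (-1) ^ (n - k))

lemma neg_one_pow_sub_eq_add {R : Type*} [Ring R] {n k : ℕ} (h : k ≤ n) :
    (-1 : R) ^ (n - k) = (-1) ^ (n + k) :=
  neg_one_pow_congr (by rw [Nat.even_sub h, Nat.even_add])

lemma coeff_alpPoly (t s : K) (n k : ℕ) :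
    (alpPoly t s n).coeff k =
      n.choose k * ((ascPochhammer K n).eval (t * k + s) / n.factorial) * (-1) ^ (n + k) := by
  rcases le_or_gt k n with hkn | hnk
  · simp [alpPoly, finsetSum_coeff, coeff_monomial, Nat.lt_succ_of_le hkn,
      neg_one_pow_sub_eq_add hkn]
  · simp [alpPoly, finsetSum_coeff, coeff_monomial, Nat.choose_eq_zero_of_lt hnk]

lemma ascPochhammer_succ_eval_left {S : Type*} [CommSemiring S] (n : ℕ) (a : S) :
    (ascPochhammer S (n + 1)).eval a = a * (ascPochhammer S n).eval (a + 1) := by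
  simp [ascPochhammer_succ_left]

lemma cast_choose_mul_add_one {R : Type*} [CommRing R] (n k : ℕ) :
    (n.choose k : R) * (n + 1) = (n + 1).choose k * (n + 1 - k) := by
  rcases le_or_gt k (n + 1) with hk | hk
  · have h := congrArg (Nat.cast : ℕ → R) (Nat.choose_mul_succ_eq n k)
    simpa [Nat.cast_sub hk] using h
  · simp [Nat.choose_eq_zero_of_lt hk, Nat.choose_eq_zero_of_lt (Nat.lt_of_succ_lt hk)]

variable [CharZero K]

lemma coeff_three_term_alpPoly_one (t : K) (n k : ℕ) :
    (((n : K) + 2) • alpPoly t 1 (n + 2) + (2 * (n : K) + 3) • alpPoly t 1 (n + 1)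
        + ((n : K) + 1) • alpPoly t 1 n).coeff k =
      (t + 1) * ((n + 2) * (t + 1) - 1) * k ^ 2 * (n + 2).choose k
        * ((ascPochhammer K n).eval (t * k + 1) / (n + 2).factorial) * (-1) ^ (n + k) := by
  have hn1 : (n : K) + 1 ≠ 0 := n.cast_add_one_ne_zero
  have hn2 : (n : K) + 2 ≠ 0 := by exact_mod_cast (n + 1).succ_ne_zero
  have hfact : (n.factorial : K) ≠ 0 := by exact_mod_cast n.factorial_ne_zero
  have choose_succ : ((n + 1).choose k : K) = (n + 2).choose k * (n + 2 - k) / (n + 2) := by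
    rw [eq_div_iff hn2]
    have h := cast_choose_mul_add_one (R := K) (n + 1) k
    push_cast at h
    linear_combination h
  have choose_self : (n.choose k : K) = (n + 1).choose k * (n + 1 - k) / (n + 1) :=
    (eq_div_iff hn1).2 (cast_choose_mul_add_one n k)
  have factorial_succ : ((n + 1).factorial : K) = (n + 1) * n.factorial := by
    exact_mod_cast n.factorial_succ
  have factorial_add_two : ((n + 2).factorial : K) = (n + 2) * ((n + 1) * n.factorial) := by
    rw [← factorial_succ]
    exact_mod_cast (n + 1).factorial_succ
  simp only [coeff_add, coeff_smul, smul_eq_mul, coeff_alpPoly, choose_self, choose_succ,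
    factorial_add_two, factorial_succ, ascPochhammer_succ_eval, Nat.cast_add, Nat.cast_one]
  field_simp
  ring

theorem rec_x_qAlp_general (t : K) (n : ℕ) :
    ((t + 1) * (((n : K) + 2) * (t + 1) - 1)) • (X * alpPoly t t (n + 1)) =
      t • (((n : K) + 2) • alpPoly t 1 (n + 2) + (2 * (n : K) + 3) • alpPoly t 1 (n + 1)
        + ((n : K) + 1) • alpPoly t 1 n) := by
  ext k
  rw [coeff_smul, coeff_smul, coeff_three_term_alpPoly_one]
  rcases k with _ | k
  · simp
  have hk1 : (k : K) + 1 ≠ 0 := k.cast_add_one_ne_zero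
  have absorb_choose : ((n + 2).choose (k + 1) : K) = (n + 2) * (n + 1).choose k / (k + 1) :=
    (eq_div_iff hk1).2 (by exact_mod_cast (Nat.add_one_mul_choose_eq (n + 1) k).symm)
  have absorb_ascPochhammer : (ascPochhammer K (n + 1)).eval (t * k + t) =
      t * (k + 1) * (ascPochhammer K n).eval (t * (k + 1) + 1) := by
    rw [ascPochhammer_succ_eval_left, mul_add_one]
  have hn2 : (n : K) + 2 ≠ 0 := by exact_mod_cast (n + 1).succ_ne_zero
  have hfact : ((n + 1).factorial : K) ≠ 0 := by exact_mod_cast (n + 1).factorial_ne_zero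
  have factorial_succ : ((n + 2).factorial : K) = (n + 2) * (n + 1).factorial := by
    exact_mod_cast (n + 1).factorial_succ
  rw [coeff_X_mul, coeff_alpPoly, absorb_choose, absorb_ascPochhammer, factorial_succ]
  simp only [smul_eq_mul, Nat.cast_add, Nat.cast_one]
  field_simp
  ring

end General

lemma pAlp_eq_eval_alpPoly (n : ℕ) (x : ℝ) : pAlp n x = (alpPoly (1 / 2) 1 n).eval x := by
  simp only [pAlp, poch, alpPoly, Polynomial.eval_finsetSum, Polynomial.eval_monomial,
    one_div_mul_eq_div]

lemma qAlp_eq_eval_alpPoly (n : ℕ) (x : ℝ) : qAlp n x = (alpPoly (1 / 2) (1 / 2) n).eval x := by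
  simp only [qAlp, poch, alpPoly, Polynomial.eval_finsetSum, Polynomial.eval_monomial,
    one_div_mul_eq_div, add_div]

/-- Recurrence `(3n-2) x q_{n-1}(x) = (2/3)(n p_n(x) + (2n-1) p_{n-1}(x) + (n-1) p_{n-2}(x))`
for `n ≥ 2`. -/
theorem rec_x_qAlp (n : ℕ) (hn : 2 ≤ n) (x : ℝ) :
    (3 * (n : ℝ) - 2) * x * qAlp (n - 1) x =
      (2 / 3) * ((n : ℝ) * pAlp n x + (2 * (n : ℝ) - 1) * pAlp (n - 1) x
        + ((n : ℝ) - 1) * pAlp (n - 2) x) := by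
  obtain ⟨m, rfl⟩ := Nat.exists_eq_add_of_le' hn
  have h := congrArg (Polynomial.eval x) (rec_x_qAlp_general (1 / 2 : ℝ) m)
  simp only [Polynomial.eval_smul, Polynomial.eval_add, Polynomial.eval_mul, Polynomial.eval_X,
    smul_eq_mul, ← pAlp_eq_eval_alpPoly, ← qAlp_eq_eval_alpPoly, Nat.add_sub_cancel,
    Nat.add_succ_sub_one, Nat.cast_add, Nat.cast_ofNat] at h ⊢
  linear_combination (4 / 3) * h
end

section
/- For every natural number n ≥ 1 and every real x, one has x·r_{n-1}(x) = (2/3)·( p_{n-1}(x) + p_n(x) ) as an identity of polynomials. -/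
open MeasureTheory intervalIntegral

/-- The polynomial `r_n(x) = ∑_{k=0}^n (n choose k) (((k+3)/2)_n / n!) (-1)^{n-k} x^k`. -/
noncomputable def rAlp (n : ℕ) (x : ℝ) : ℝ :=
  ∑ k ∈ Finset.range (n + 1),
    (n.choose k : ℝ) * (poch (((k : ℝ) + 3) / 2) n / (n.factorial : ℝ)) * (-1) ^ (n - k) * x ^ k

/-!
The coefficient of `x ^ (k + 1)` in `p_n + p_{n+1}` is, for `a = (k + 3) / 2`, equal to
`(a + k) / (k + 1)` times the coefficient of `x ^ k` in `r_n`. The factor is constant because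
`a + k = (3 / 2) (k + 1)`; the constant terms cancel since `(1)_n = n!`. The same argument works
with `1 / 2` replaced by any slope `c`, the constant factor then being `c + 1`.
-/

section General

variable {K : Type*} [Field K]

/-- The coefficient `(n choose k) ((a)_n / n!) (-1)^(n-k)` common to `p_n` and `r_n`, with the
parameter `a` of the Pochhammer symbol left free. -/
noncomputable def signedPochCoeff (a : K) (n k : ℕ) : K :=
  n.choose k * ((ascPochhammer K n).eval a / n.factorial) * (-1) ^ (n - k)

/-- The polynomial `∑_{k=0}^n (n choose k) ((c k + b)_n / n!) (-1)^(n-k) x^k`, whose Pochhammer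
parameter is affine in `k`. It specializes to `p_n` for `(c, b) = (1/2, 1)` and to `r_n` for
`(c, b) = (1/2, 3/2)`. -/
noncomputable def affinePochSum (c b : K) (n : ℕ) (x : K) : K :=
  ∑ k ∈ Finset.range (n + 1), signedPochCoeff (c * k + b) n k * x ^ k

theorem signedPochCoeff_eq_zero_of_lt (a : K) {n k : ℕ} (h : n < k) :
    signedPochCoeff a n k = 0 := by
  simp [signedPochCoeff, Nat.choose_eq_zero_of_lt h]

theorem affinePochSum_eq_sum_range_add_two (c b : K) (n : ℕ) (x : K) :
    affinePochSum c b n x =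
      ∑ k ∈ Finset.range (n + 2), signedPochCoeff (c * k + b) n k * x ^ k := by
  rw [Finset.sum_range_succ, signedPochCoeff_eq_zero_of_lt _ n.lt_succ_self, zero_mul, add_zero,
    affinePochSum]

theorem choose_succ_mul_neg_one_pow {R : Type*} [Ring R] (n k : ℕ) :
    (n.choose (k + 1) : R) * (-1) ^ (n - (k + 1)) = -(n.choose (k + 1) * (-1) ^ (n - k)) := by
  obtain hnk | hkn := le_or_gt n k
  · simp [Nat.choose_eq_zero_of_lt (Nat.lt_succ_of_le hnk)]
  · have exponent_succ : n - k = n - (k + 1) + 1 := by omega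
    simp [exponent_succ, pow_succ]

theorem cast_choose_succ_mul {R : Type*} [Ring R] (n k : ℕ) :
    (n.choose (k + 1) : R) * (k + 1) = n.choose k * (n - k) := by
  obtain hkn | hnk := le_or_gt k n
  · rw [← Nat.cast_sub hkn]
    exact_mod_cast congrArg (Nat.cast (R := R)) (Nat.choose_succ_right_eq n k)
  · simp [Nat.choose_eq_zero_of_lt hnk, Nat.choose_eq_zero_of_lt (hnk.trans k.lt_succ_self)]

theorem ascPochhammer_succ_eval_div_factorial (a : K) (n : ℕ) :
    (ascPochhammer K (n + 1)).eval a / (n + 1).factorial =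
      (ascPochhammer K n).eval a / n.factorial * ((a + n) / (n + 1)) := by
  rw [ascPochhammer_succ_eval, Nat.factorial_succ, mul_comm (n + 1), Nat.cast_mul,
    Nat.cast_add_one, mul_div_mul_comm]

variable [CharZero K]

theorem signedPochCoeff_one_zero (n : ℕ) : signedPochCoeff (1 : K) n 0 = (-1) ^ n := by
  have factorial_ne_zero : (n.factorial : K) ≠ 0 := Nat.cast_ne_zero.mpr n.factorial_ne_zero
  simp [signedPochCoeff, ascPochhammer_eval_one, factorial_ne_zero]

theorem signedPochCoeff_add_signedPochCoeff_succ (a : K) (n k : ℕ) :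
    signedPochCoeff a n (k + 1) + signedPochCoeff a (n + 1) (k + 1) =
      (a + k) / (k + 1) * signedPochCoeff a n k := by
  have hn : (n + 1 : K) ≠ 0 := n.cast_add_one_ne_zero
  have hk : (k + 1 : K) ≠ 0 := k.cast_add_one_ne_zero
  have choose_succ_right : (n.choose (k + 1) : K) = n.choose k * (n - k) / (k + 1) :=
    eq_div_of_mul_eq hk (cast_choose_succ_mul n k)
  have choose_succ_succ : ((n + 1).choose (k + 1) : K) = (n + 1) * n.choose k / (k + 1) :=
    eq_div_of_mul_eq hk (mod_cast (Nat.add_one_mul_choose_eq n k).symm)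
  set q : K := (ascPochhammer K n).eval a / n.factorial
  calc signedPochCoeff a n (k + 1) + signedPochCoeff a (n + 1) (k + 1)
      = q * (-1) ^ (n - k) *
          ((n + 1).choose (k + 1) * ((a + n) / (n + 1)) - n.choose (k + 1)) := by
        rw [signedPochCoeff, signedPochCoeff, mul_right_comm, choose_succ_mul_neg_one_pow,
          ascPochhammer_succ_eval_div_factorial, Nat.add_sub_add_right]
        ring
    _ = q * (-1) ^ (n - k) * ((a + k) / (k + 1) * n.choose k) := by
        rw [choose_succ_right, choose_succ_succ]
        field_simp
        ring
    _ = (a + k) / (k + 1) * signedPochCoeff a n k := by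
        rw [signedPochCoeff]
        ring

theorem signedPochCoeff_affine_add_succ (c : K) (n k : ℕ) :
    signedPochCoeff (c * (k + 1 : ℕ) + 1) n (k + 1) +
        signedPochCoeff (c * (k + 1 : ℕ) + 1) (n + 1) (k + 1) =
      (c + 1) * signedPochCoeff (c * k + (c + 1)) n k := by
  have hk : (k + 1 : K) ≠ 0 := k.cast_add_one_ne_zero
  have parameter_shift : c * (k + 1 : ℕ) + 1 = c * k + (c + 1) := by push_cast; ring
  have constant_ratio : (c * k + (c + 1) + k) / (k + 1) = c + 1 := by
    rw [div_eq_iff hk]; ring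
  rw [signedPochCoeff_add_signedPochCoeff_succ, parameter_shift, constant_ratio]

theorem rec_x_rAlp_general (c : K) (n : ℕ) (x : K) :
    (c + 1) * (x * affinePochSum c (c + 1) n x) =
      affinePochSum c 1 n x + affinePochSum c 1 (n + 1) x := by
  have constant_terms_cancel :
      signedPochCoeff (c * (0 : ℕ) + 1) n 0 + signedPochCoeff (c * (0 : ℕ) + 1) (n + 1) 0 = 0 := by
    simp [signedPochCoeff_one_zero, pow_succ]
  symm
  calc affinePochSum c 1 n x + affinePochSum c 1 (n + 1) x
      = ∑ k ∈ Finset.range (n + 2),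
          (signedPochCoeff (c * k + 1) n k + signedPochCoeff (c * k + 1) (n + 1) k) * x ^ k := by
        rw [affinePochSum_eq_sum_range_add_two, affinePochSum, ← Finset.sum_add_distrib]
        simp only [add_mul]
    _ = ∑ k ∈ Finset.range (n + 1),
          (c + 1) * signedPochCoeff (c * k + (c + 1)) n k * x ^ (k + 1) := by
        rw [Finset.sum_range_succ', constant_terms_cancel, zero_mul, add_zero]
        simp only [signedPochCoeff_affine_add_succ]
    _ = (c + 1) * (x * affinePochSum c (c + 1) n x) := by
        simp only [affinePochSum, Finset.mul_sum]
        exact Finset.sum_congr rfl fun k _ => by ring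

end General

theorem pAlp_eq_affinePochSum (n : ℕ) (x : ℝ) : pAlp n x = affinePochSum (1 / 2) 1 n x := by
  simp only [pAlp, affinePochSum, signedPochCoeff, poch, one_div_mul_eq_div]

theorem rAlp_eq_affinePochSum (n : ℕ) (x : ℝ) :
    rAlp n x = affinePochSum (1 / 2) (1 / 2 + 1) n x := by
  have parameter_eq (k : ℕ) : ((k : ℝ) + 3) / 2 = 1 / 2 * k + (1 / 2 + 1) := by ring
  simp only [rAlp, affinePochSum, signedPochCoeff, poch, parameter_eq]

/-- `x r_{n-1}(x) = (2/3)(p_{n-1}(x) + p_n(x))` for `n ≥ 1`. -/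
theorem rec_x_rAlp (n : ℕ) (hn : 1 ≤ n) (x : ℝ) :
    x * rAlp (n - 1) x = (2 / 3) * (pAlp (n - 1) x + pAlp n x) := by
  obtain ⟨m, rfl⟩ := Nat.exists_eq_add_of_le' hn
  simp only [Nat.add_sub_cancel, rAlp_eq_affinePochSum, pAlp_eq_affinePochSum]
  linear_combination (2 / 3) * rec_x_rAlp_general (1 / 2 : ℝ) m x
end

section
/- Off-diagonal type I Legendre-Angelesco polynomials: for every natural number n ≥ 1, set b_n = 2·(n/2+1)_n·(2n)!/(3n+1)!, β₁ = (n/2+1)_n/n! (= binom(n+n/2, n)) and β₂ = ((n+1)/2)_n/n! (= binom(n+(n-1)/2, n)). Define B(x) = (β₁·q_n(x) − β₂·p_n(x))/b_n and A(x) = (β₁·q_n(−x) + β₂·p_n(−x))/b_n. Then B is a polynomial of degree at most n−1, A is a polynomial of degree n, and the function Q(x) = A(x) for x ∈ [−1,0), Q(x) = B(x) for x ∈ [0,1], Q(x)=0 otherwise, satisfies ∫_{−1}^1 Q(x)·x^k dx = 0 for 0 ≤ k ≤ 2n−1 and ∫_{−1}^1 Q(x)·x^{2n} dx = 1. (Thus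 A = A_{n+1,n} and B = B_{n+1,n} are the type I Legendre-Angelesco polynomials for the multi-index (n+1,n).) -/
open MeasureTheory intervalIntegral Polynomial

/-! A polynomial `f` of degree at most `n` is recovered from its values at `0, …, n` by the
barycentric Lagrange formula, whose weights at these nodes are `(-1)^(n-k) (n choose k) / n!`.
Evaluated at `-(m+1)`, the formula says that the `m`-th moment over `[0,1]` of
`∑ k, (-1)^(n-k) (n choose k) f(k) x^k` is `(-1)^n n! m! / (m+n+1)! * f(-(m+1))`. For `q_n` and
`p_n` the polynomial `f` is `(x/2 + c)_n / n!` with `c = 1/2` and `c = 1`, so the even moments of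
`q_n` and the odd moments of `p_n` of order less than `2n` vanish. Gluing `(u + v)(-x)` on `[-1,0)`
to `(u - v)(x)` on `[0,1]` makes the even moments see only `u`, and the odd ones only `v`; here `u`
and `v` are multiples of `q_n` and `p_n` whose leading coefficients cancel in `u - v`. -/

section BarycentricFormula

variable {K : Type*} [Field K]

theorem eval_neg_nodal_range_natCast (m : ℕ) (a : K) :
    (Lagrange.nodal (Finset.range m) (Nat.cast : ℕ → K)).eval (-a) =
      (-1) ^ m * (ascPochhammer K m).eval a := by
  rw [Lagrange.eval_nodal, ← descPochhammer_eval_eq_prod_range, ← neg_neg a,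
    ascPochhammer_eval_neg_eq_descPochhammer, neg_neg, ← mul_assoc, ← mul_pow]
  simp

theorem prod_range_erase_natCast_sub (k d : ℕ) :
    ∏ j ∈ (Finset.range (k + d + 1)).erase k, ((k : K) - j) =
      (-1) ^ d * (k.factorial * d.factorial) := by
  induction d with
  | zero =>
    rw [add_zero, Finset.range_add_one, Finset.erase_insert Finset.notMem_range_self,
      ← descPochhammer_eval_eq_prod_range, descPochhammer_eval_eq_descFactorial,
      Nat.descFactorial_self]
    simp
  | succ d ih =>
    rw [← add_assoc k d 1, Finset.range_add_one, Finset.erase_insert_of_ne (by omega),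
      Finset.prod_insert (by simp), ih, Nat.factorial_succ]
    push_cast
    ring

variable [CharZero K]

theorem nodalWeight_range_natCast {n k : ℕ} (hk : k ≤ n) :
    Lagrange.nodalWeight (Finset.range (n + 1)) (Nat.cast : ℕ → K) k =
      (-1) ^ (n - k) * n.choose k / n.factorial := by
  obtain ⟨d, rfl⟩ := Nat.exists_eq_add_of_le hk
  have hfact : ((k + d).factorial : K) ≠ 0 := Nat.cast_ne_zero.2 (Nat.factorial_ne_zero _)
  have hsign : (((-1 : K) ^ d)⁻¹) = (-1) ^ d := by rw [← inv_pow, inv_neg_one]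
  rw [Lagrange.nodalWeight, Finset.prod_inv_distrib, prod_range_erase_natCast_sub,
    Nat.cast_choose K hk, Nat.add_sub_cancel_left, mul_inv, hsign]
  field_simp

theorem sum_choose_mul_eval_div {n : ℕ} {f : K[X]} (hf : f.natDegree ≤ n) {a : K}
    (ha : ∀ k ≤ n, (k : K) + a ≠ 0) :
    ∑ k ∈ Finset.range (n + 1), (-1) ^ (n - k) * n.choose k * f.eval (k : K) / (k + a) =
      (-1) ^ n * n.factorial * f.eval (-a) / (ascPochhammer K (n + 1)).eval a := by
  have hdeg : f.degree < (Finset.range (n + 1)).card := by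
    rw [Finset.card_range]
    exact (degree_le_of_natDegree_le hf).trans_lt (by exact_mod_cast n.lt_succ_self)
  have hnode : ∀ k ∈ Finset.range (n + 1), -a ≠ k := by
    intro k hk h
    exact ha k (Finset.mem_range_succ_iff.1 hk) (by rw [← h, neg_add_cancel])
  have hfact : (n.factorial : K) ≠ 0 := Nat.cast_ne_zero.2 n.factorial_ne_zero
  have hterm : ∀ k ∈ Finset.range (n + 1),
      (-1) ^ (n - k) * n.choose k * f.eval (k : K) / (k + a) = -n.factorial *
        (Lagrange.nodalWeight (Finset.range (n + 1)) Nat.cast k * (-a - k)⁻¹ * f.eval (k : K)) := by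
    intro k hk
    rw [nodalWeight_range_natCast (Finset.mem_range_succ_iff.1 hk),
      show -a - (k : K) = -(k + a) by ring, inv_neg]
    field_simp
  have hnodal := Lagrange.eval_nodal_not_at_node hnode
  have hbary := congrArg (eval (-a)) (Lagrange.eq_interpolate Nat.cast_injective.injOn hdeg)
  rw [Lagrange.eval_interpolate_not_at_node _ hnode, mul_comm, ← div_eq_iff hnodal] at hbary
  have hsign : (-1 : K) ^ n * (-1) ^ n = 1 := by simp [← mul_pow]
  rw [Finset.sum_congr rfl hterm, ← Finset.mul_sum, ← hbary]
  rw [eval_neg_nodal_range_natCast] at hnodal ⊢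
  have hpoch := right_ne_zero_of_mul hnodal
  field_simp
  linear_combination f.eval (-a) * hsign

end BarycentricFormula

section AlternatingBinomialPoly

/-- The polynomial `∑ k ≤ n, (-1)^(n-k) (n choose k) f(k) x^k`: the generating polynomial of the
terms of the `n`-th forward difference of `f` at `0`. Both `p_n` and `q_n` have this form. -/
noncomputable def alternatingBinomialPoly {R : Type*} [CommRing R] (n : ℕ) (f : R[X]) : R[X] :=
  ∑ k ∈ Finset.range (n + 1), C ((-1) ^ (n - k) * n.choose k * f.eval (k : R)) * X ^ k

theorem coeff_alternatingBinomialPoly {R : Type*} [CommRing R] (n k : ℕ) (f : R[X]) :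
    (alternatingBinomialPoly n f).coeff k = (-1) ^ (n - k) * n.choose k * f.eval (k : R) := by
  simp only [alternatingBinomialPoly, finsetSum_coeff, coeff_C_mul_X_pow,
    Finset.sum_ite_eq, Finset.mem_range_succ_iff, ite_eq_left_iff, not_le]
  intro hk
  simp [Nat.choose_eq_zero_of_lt hk]

theorem natDegree_alternatingBinomialPoly_le {R : Type*} [CommRing R] (n : ℕ) (f : R[X]) :
    (alternatingBinomialPoly n f).natDegree ≤ n :=
  natDegree_le_iff_coeff_eq_zero.2 fun k hk ↦ by
    simp [coeff_alternatingBinomialPoly, Nat.choose_eq_zero_of_lt hk]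

theorem integral_alternatingBinomialPoly_mul_pow {n : ℕ} {f : ℝ[X]} (hf : f.natDegree ≤ n)
    (m : ℕ) :
    ∫ x in (0 : ℝ)..1, (alternatingBinomialPoly n f).eval x * x ^ m =
      (-1) ^ n * n.factorial * m.factorial / (m + n + 1).factorial * f.eval (-(m + 1 : ℝ)) := by
  have hpoch : ((m + n + 1).factorial : ℝ) =
      m.factorial * (ascPochhammer ℝ (n + 1)).eval (m + 1 : ℝ) := by
    rw [factorial_mul_ascPochhammer, add_assoc]
  calc ∫ x in (0 : ℝ)..1, (alternatingBinomialPoly n f).eval x * x ^ m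
      = ∫ x in (0 : ℝ)..1, ∑ k ∈ Finset.range (n + 1),
          (-1) ^ (n - k) * n.choose k * f.eval (k : ℝ) * x ^ (k + m) := by
        simp [alternatingBinomialPoly, eval_finsetSum, Finset.sum_mul, pow_add, mul_assoc]
    _ = ∑ k ∈ Finset.range (n + 1),
          (-1) ^ (n - k) * n.choose k * f.eval (k : ℝ) / (k + (m + 1 : ℝ)) := by
        rw [intervalIntegral.integral_finsetSum
          fun k _ ↦ Continuous.intervalIntegrable (by fun_prop) _ _]
        simp [integral_pow, div_eq_mul_inv, add_assoc]
    _ = (-1) ^ n * n.factorial * m.factorial / (m + n + 1).factorial * f.eval (-(m + 1 : ℝ)) := by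
        rw [sum_choose_mul_eval_div hf fun k _ ↦ by positivity, hpoch]
        field_simp

end AlternatingBinomialPoly

section LeadingCoefficients

variable {R : Type*} [CommRing R] {p q : R[X]} {n : ℕ} {s t : R}

theorem natDegree_C_mul_sub_C_mul_le (hp : p.natDegree ≤ n) (hq : q.natDegree ≤ n)
    (hcoeff : s * p.coeff n = t * q.coeff n) : (C s * p - C t * q).natDegree ≤ n - 1 := by
  refine natDegree_le_iff_coeff_eq_zero.2 fun k hk ↦ ?_
  rw [coeff_sub, coeff_C_mul, coeff_C_mul]
  obtain rfl | hlt : k = n ∨ n < k := by omega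
  · rw [hcoeff, sub_self]
  · rw [coeff_eq_zero_of_natDegree_lt (hp.trans_lt hlt),
      coeff_eq_zero_of_natDegree_lt (hq.trans_lt hlt), mul_zero, mul_zero, sub_zero]

theorem degree_C_mul_add_C_mul_eq (hp : p.natDegree ≤ n) (hq : q.natDegree ≤ n)
    (hcoeff : s * p.coeff n + t * q.coeff n ≠ 0) : (C s * p + C t * q).degree = n := by
  refine degree_eq_of_le_of_coeff_ne_zero (degree_le_of_natDegree_le ?_) (by simpa using hcoeff)
  exact natDegree_add_le_of_degree_le ((natDegree_C_mul_le _ _).trans hp)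
    ((natDegree_C_mul_le _ _).trans hq)

end LeadingCoefficients

section ReflectionGluing

theorem integral_neg_self_eq_integral_add {E : Type*} [NormedAddCommGroup E] [NormedSpace ℝ E]
    {F g h : ℝ → E} {c : ℝ} (hc : 0 ≤ c) (hg : IntervalIntegrable g volume 0 c)
    (hh : IntervalIntegrable h volume 0 c) (hFg : ∀ x ∈ Set.Ioo 0 c, F (-x) = g x)
    (hFh : ∀ x ∈ Set.Ioo 0 c, F x = h x) :
    ∫ x in -c..c, F x = ∫ x in 0..c, g x + h x := by
  have hright : Set.EqOn h F (Set.uIoo 0 c) := by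
    rw [Set.uIoo_of_le hc]
    exact fun x hx ↦ (hFh x hx).symm
  have hleft : Set.EqOn g (fun x ↦ F (-x)) (Set.uIoo 0 c) := by
    rw [Set.uIoo_of_le hc]
    exact fun x hx ↦ (hFg x hx).symm
  have hFleft : IntervalIntegrable F volume (-c) 0 := by
    simpa using ((IntervalIntegrable.iff_comp_neg).1 (hg.congr_uIoo hleft)).symm
  rw [← integral_add_adjacent_intervals hFleft (hh.congr_uIoo hright),
    ← integral_congr_uIoo hright, integral_add hg hh, integral_congr_uIoo hleft,
    integral_comp_neg, neg_zero]

/-- `Q` is `u + v` reflected to the left half of `(-c, c)` and `u - v` on the right half, so that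
even weights integrate only `u` against `Q`, and odd weights only `v`. The values of `Q` at `0` and
outside `(-c, c)` are unconstrained. -/
structure IsReflectionGluing (Q u v : ℝ → ℝ) (c : ℝ) : Prop where
  neg : ∀ x ∈ Set.Ioo 0 c, Q (-x) = u x + v x
  pos : ∀ x ∈ Set.Ioo 0 c, Q x = u x - v x

namespace IsReflectionGluing

variable {Q u v w : ℝ → ℝ} {c : ℝ}

theorem integral_mul_even (hQ : IsReflectionGluing Q u v c) (hc : 0 ≤ c)
    (hu : IntervalIntegrable (fun x ↦ u x * w x) volume 0 c)
    (hv : IntervalIntegrable (fun x ↦ v x * w x) volume 0 c) (hw : w.Even) :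
    ∫ x in -c..c, Q x * w x = 2 * ∫ x in 0..c, u x * w x := by
  rw [integral_neg_self_eq_integral_add hc (hu.add hv) (hu.sub hv)
    (fun x hx ↦ by rw [hQ.neg x hx, hw x, add_mul]) (fun x hx ↦ by rw [hQ.pos x hx, sub_mul]),
    ← intervalIntegral.integral_const_mul]
  congr! 2
  ring

theorem integral_mul_odd (hQ : IsReflectionGluing Q u v c) (hc : 0 ≤ c)
    (hu : IntervalIntegrable (fun x ↦ u x * w x) volume 0 c)
    (hv : IntervalIntegrable (fun x ↦ v x * w x) volume 0 c) (hw : w.Odd) :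
    ∫ x in -c..c, Q x * w x = -2 * ∫ x in 0..c, v x * w x := by
  rw [integral_neg_self_eq_integral_add (g := fun x ↦ -(u x * w x + v x * w x)) hc
    (hu.add hv).neg (hu.sub hv) (fun x hx ↦ by rw [hQ.neg x hx, hw x, mul_neg, add_mul])
    (fun x hx ↦ by rw [hQ.pos x hx, sub_mul]), ← intervalIntegral.integral_const_mul]
  congr! 2
  ring

end IsReflectionGluing

end ReflectionGluing

section AngelescoPolynomials

/-- The polynomial `(x/2 + c)_n / n!` in `x`, whose values at `0, …, n` enter the coefficients of
`p_n` (for `c = 1`) and of `q_n` (for `c = 1/2`). -/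
noncomputable def pochHalf (n : ℕ) (c : ℝ) : ℝ[X] :=
  C (n.factorial : ℝ)⁻¹ * (ascPochhammer ℝ n).comp (C (1 / 2) * X + C c)

theorem eval_pochHalf (n : ℕ) (c x : ℝ) :
    (pochHalf n c).eval x = poch (x / 2 + c) n / n.factorial := by
  simp [pochHalf, poch, eval_comp, div_eq_inv_mul]

theorem natDegree_pochHalf_le (n : ℕ) (c : ℝ) : (pochHalf n c).natDegree ≤ n := by
  refine (natDegree_C_mul_le _ _).trans (natDegree_comp_le.trans ?_)
  rw [ascPochhammer_natDegree]
  exact (Nat.mul_le_mul_left n natDegree_linear_le).trans_eq (mul_one n)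

/-- The polynomials `∑ k ≤ n, (n choose k) ((k/2 + c)_n / n!) (-1)^(n-k) x^k`, a one-parameter
family containing `p_n` (for `c = 1`) and `q_n` (for `c = 1/2`). -/
noncomputable def angelescoPoly (n : ℕ) (c : ℝ) : ℝ[X] :=
  alternatingBinomialPoly n (pochHalf n c)

theorem natDegree_angelescoPoly_le (n : ℕ) (c : ℝ) : (angelescoPoly n c).natDegree ≤ n :=
  natDegree_alternatingBinomialPoly_le n _

theorem pAlp_eq_eval (n : ℕ) (x : ℝ) :
    pAlp n x = (angelescoPoly n 1).eval x := by
  simp only [pAlp, angelescoPoly, alternatingBinomialPoly, eval_finsetSum, eval_C_mul, eval_pow,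
    eval_X, eval_pochHalf]
  exact Finset.sum_congr rfl fun k _ ↦ by ring

theorem qAlp_eq_eval (n : ℕ) (x : ℝ) :
    qAlp n x = (angelescoPoly n (1 / 2)).eval x := by
  simp only [qAlp, angelescoPoly, alternatingBinomialPoly, eval_finsetSum, eval_C_mul, eval_pow,
    eval_X, eval_pochHalf, add_div]
  exact Finset.sum_congr rfl fun k _ ↦ by ring

theorem continuous_pAlp (n : ℕ) : Continuous (pAlp n) := by
  unfold pAlp
  fun_prop

theorem continuous_qAlp (n : ℕ) : Continuous (qAlp n) := by
  unfold qAlp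
  fun_prop

theorem coeff_self_angelescoPoly (n : ℕ) (c : ℝ) :
    (angelescoPoly n c).coeff n = poch (n / 2 + c) n / n.factorial := by
  simp [angelescoPoly, coeff_alternatingBinomialPoly, eval_pochHalf]

theorem integral_angelescoPoly_mul_pow (n m : ℕ) {c a : ℝ}
    (hc : c = (m + 1) / 2 - a) :
    ∫ x in (0 : ℝ)..1, (angelescoPoly n c).eval x * x ^ m =
      (-1) ^ n * m.factorial / (m + n + 1).factorial * poch (-a) n := by
  rw [angelescoPoly, integral_alternatingBinomialPoly_mul_pow (natDegree_pochHalf_le n c),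
    eval_pochHalf, hc, show -((m : ℝ) + 1) / 2 + ((m + 1) / 2 - a) = -a by ring]
  field_simp

theorem integral_qAlp_mul_pow_even_eq_zero {n j : ℕ} (hj : j < n) :
    ∫ x in (0 : ℝ)..1, qAlp n x * x ^ (2 * j) = 0 := by
  simp only [qAlp_eq_eval]
  rw [integral_angelescoPoly_mul_pow (a := j) n _ (by push_cast; ring), poch,
    ascPochhammer_eval_neg_coe_nat_of_lt hj, mul_zero]

theorem integral_pAlp_mul_pow_odd_eq_zero {n j : ℕ} (hj : j < n) :
    ∫ x in (0 : ℝ)..1, pAlp n x * x ^ (2 * j + 1) = 0 := by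
  simp only [pAlp_eq_eval]
  rw [integral_angelescoPoly_mul_pow (a := j) n _ (by push_cast; ring), poch,
    ascPochhammer_eval_neg_coe_nat_of_lt hj, mul_zero]

theorem integral_qAlp_mul_pow_two_mul_self (n : ℕ) :
    ∫ x in (0 : ℝ)..1, qAlp n x * x ^ (2 * n) =
      n.factorial * (2 * n).factorial / (3 * n + 1).factorial := by
  have hpoch : poch (-(n : ℝ)) n = (-1) ^ n * n.factorial := by
    rw [poch, ascPochhammer_eval_neg_eq_descPochhammer, descPochhammer_eval_eq_descFactorial,
      Nat.descFactorial_self]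
  have hsign : (-1 : ℝ) ^ n * (-1) ^ n = 1 := by simp [← mul_pow]
  simp only [qAlp_eq_eval]
  rw [integral_angelescoPoly_mul_pow (a := n) n _ (by push_cast; ring), hpoch,
    show 2 * n + n + 1 = 3 * n + 1 by ring]
  linear_combination
    ((n.factorial * (2 * n).factorial / (3 * n + 1).factorial : ℝ)) * hsign

theorem exists_degree_le_eval_eq_qAlp_sub_pAlp {n : ℕ} {s t : ℝ}
    (hcoeff : s * (poch ((n + 1) / 2) n / n.factorial) = t * (poch (n / 2 + 1) n / n.factorial)) :
    ∃ P : ℝ[X], P.degree ≤ (n - 1 : ℕ) ∧ ∀ x, P.eval x = s * qAlp n x - t * pAlp n x := by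
  refine ⟨C s * angelescoPoly n (1 / 2) - C t * angelescoPoly n 1, degree_le_of_natDegree_le ?_,
    fun x ↦ by simp only [eval_sub, eval_C_mul, pAlp_eq_eval, qAlp_eq_eval]⟩
  refine natDegree_C_mul_sub_C_mul_le (natDegree_angelescoPoly_le n _)
    (natDegree_angelescoPoly_le n _) ?_
  rwa [coeff_self_angelescoPoly, coeff_self_angelescoPoly, ← add_div]

theorem exists_degree_eq_eval_eq_qAlp_add_pAlp_neg {n : ℕ} {s t : ℝ}
    (hcoeff : s * (poch ((n + 1) / 2) n / n.factorial) +
      t * (poch (n / 2 + 1) n / n.factorial) ≠ 0) :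
    ∃ P : ℝ[X], P.degree = n ∧ ∀ x, P.eval x = s * qAlp n (-x) + t * pAlp n (-x) := by
  refine ⟨(C s * angelescoPoly n (1 / 2) + C t * angelescoPoly n 1).comp (-X), ?_, fun x ↦ by
    simp only [eval_comp, eval_add, eval_C_mul, eval_neg, eval_X, pAlp_eq_eval, qAlp_eq_eval]⟩
  rw [degree_comp_neg_X]
  refine degree_C_mul_add_C_mul_eq (natDegree_angelescoPoly_le n _)
    (natDegree_angelescoPoly_le n _) ?_
  rwa [coeff_self_angelescoPoly, coeff_self_angelescoPoly, ← add_div]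

end AngelescoPolynomials

section GluedMoments

variable {n : ℕ} {s t : ℝ} {Q : ℝ → ℝ}

theorem integral_mul_pow_even_of_gluing
    (hQ : IsReflectionGluing Q (fun x ↦ s * qAlp n x) (fun x ↦ t * pAlp n x) 1) (j : ℕ) :
    ∫ x in (-1 : ℝ)..1, Q x * x ^ (2 * j) =
      2 * s * ∫ x in (0 : ℝ)..1, qAlp n x * x ^ (2 * j) := by
  have hp := continuous_pAlp n
  have hq := continuous_qAlp n
  rw [hQ.integral_mul_even (w := fun x ↦ x ^ (2 * j)) zero_le_one
    (Continuous.intervalIntegrable (by fun_prop) _ _)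
    (Continuous.intervalIntegrable (by fun_prop) _ _) fun x ↦ (even_two_mul j).neg_pow x]
  simp only [mul_assoc, intervalIntegral.integral_const_mul]

theorem integral_mul_pow_odd_of_gluing
    (hQ : IsReflectionGluing Q (fun x ↦ s * qAlp n x) (fun x ↦ t * pAlp n x) 1) (j : ℕ) :
    ∫ x in (-1 : ℝ)..1, Q x * x ^ (2 * j + 1) =
      -2 * t * ∫ x in (0 : ℝ)..1, pAlp n x * x ^ (2 * j + 1) := by
  have hp := continuous_pAlp n
  have hq := continuous_qAlp n
  rw [hQ.integral_mul_odd (w := fun x ↦ x ^ (2 * j + 1)) zero_le_one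
    (Continuous.intervalIntegrable (by fun_prop) _ _)
    (Continuous.intervalIntegrable (by fun_prop) _ _) fun x ↦ (odd_two_mul_add_one j).neg_pow x]
  simp only [mul_assoc, intervalIntegral.integral_const_mul]

theorem integral_mul_pow_eq_zero_of_gluing
    (hQ : IsReflectionGluing Q (fun x ↦ s * qAlp n x) (fun x ↦ t * pAlp n x) 1) {k : ℕ}
    (hk : k < 2 * n) : ∫ x in (-1 : ℝ)..1, Q x * x ^ k = 0 := by
  obtain ⟨j, rfl | rfl⟩ := k.even_or_odd'
  · rw [integral_mul_pow_even_of_gluing hQ, integral_qAlp_mul_pow_even_eq_zero (by omega), mul_zero]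
  · rw [integral_mul_pow_odd_of_gluing hQ, integral_pAlp_mul_pow_odd_eq_zero (by omega), mul_zero]

theorem integral_mul_pow_two_mul_self_of_gluing
    (hQ : IsReflectionGluing Q (fun x ↦ s * qAlp n x) (fun x ↦ t * pAlp n x) 1) :
    ∫ x in (-1 : ℝ)..1, Q x * x ^ (2 * n) =
      2 * s * (n.factorial * (2 * n).factorial / (3 * n + 1).factorial) := by
  rw [integral_mul_pow_even_of_gluing hQ, integral_qAlp_mul_pow_two_mul_self]

end GluedMoments

/-- Off-diagonal type I Legendre-Angelesco polynomials: for `n ≥ 1`, with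
`b = 2 (n/2+1)_n (2n)!/(3n+1)!`, `β₁ = (n/2+1)_n/n!`, `β₂ = ((n+1)/2)_n/n!`,
`B(x) = (β₁ q_n(x) - β₂ p_n(x))/b` and `A(x) = (β₁ q_n(-x) + β₂ p_n(-x))/b`,
the function `B` is a polynomial of degree at most `n-1`, `A` is a polynomial of degree `n`,
and the piecewise function `Q` (equal to `A` on `[-1,0)`, to `B` on `[0,1]`, `0` elsewhere)
has vanishing moments of order `≤ 2n-1` and moment `1` of order `2n`. -/
theorem typeI_offdiagonal (n : ℕ) (hn : 1 ≤ n) (b β₁ β₂ : ℝ)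
    (hb : b = 2 * poch ((n : ℝ) / 2 + 1) n * ((2 * n).factorial : ℝ) /
      ((3 * n + 1).factorial : ℝ))
    (hβ₁ : β₁ = poch ((n : ℝ) / 2 + 1) n / (n.factorial : ℝ))
    (hβ₂ : β₂ = poch (((n : ℝ) + 1) / 2) n / (n.factorial : ℝ))
    (A B : ℝ → ℝ)
    (hB : ∀ x, B x = (β₁ * qAlp n x - β₂ * pAlp n x) / b)
    (hA : ∀ x, A x = (β₁ * qAlp n (-x) + β₂ * pAlp n (-x)) / b)
    (Q : ℝ → ℝ)
    (hQ1 : ∀ x ∈ Set.Ico (-1 : ℝ) 0, Q x = A x)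
    (hQ2 : ∀ x ∈ Set.Icc (0 : ℝ) 1, Q x = B x)
    (hQ3 : ∀ x, x ∉ Set.Icc (-1 : ℝ) 1 → Q x = 0) :
    (∃ PB : Polynomial ℝ, PB.degree ≤ ((n - 1 : ℕ) : WithBot ℕ) ∧ ∀ x, B x = PB.eval x) ∧
    (∃ PA : Polynomial ℝ, PA.degree = (n : WithBot ℕ) ∧ ∀ x, A x = PA.eval x) ∧
    (∀ k : ℕ, k ≤ 2 * n - 1 → ∫ x in (-1 : ℝ)..1, Q x * x ^ k = 0) ∧
      ∫ x in (-1 : ℝ)..1, Q x * x ^ (2 * n) = 1 := by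
  have hβ₁_pos : 0 < β₁ := hβ₁ ▸ div_pos (ascPochhammer_pos _ _ (by positivity)) (by positivity)
  have hβ₂_pos : 0 < β₂ := hβ₂ ▸ div_pos (ascPochhammer_pos _ _ (by positivity)) (by positivity)
  have hb_eq : b = 2 * β₁ * (n.factorial * (2 * n).factorial / (3 * n + 1).factorial) := by
    rw [hb, hβ₁]
    field_simp
  have hb_pos : 0 < b := by rw [hb_eq]; positivity
  have hA_eq : ∀ x, A x = β₁ / b * qAlp n (-x) + β₂ / b * pAlp n (-x) := fun x ↦ by rw [hA]; ring
  have hB_eq : ∀ x, B x = β₁ / b * qAlp n x - β₂ / b * pAlp n x := fun x ↦ by rw [hB]; ring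
  obtain ⟨PB, hPB_deg, hPB⟩ := exists_degree_le_eval_eq_qAlp_sub_pAlp (n := n)
    (s := β₁ / b) (t := β₂ / b) (by rw [← hβ₁, ← hβ₂]; ring)
  obtain ⟨PA, hPA_deg, hPA⟩ := exists_degree_eq_eval_eq_qAlp_add_pAlp_neg (n := n)
    (s := β₁ / b) (t := β₂ / b) (by rw [← hβ₁, ← hβ₂]; positivity)
  have hQ : IsReflectionGluing Q (fun x ↦ β₁ / b * qAlp n x) (fun x ↦ β₂ / b * pAlp n x) 1 :=
    ⟨fun x hx ↦ by rw [hQ1 _ ⟨by linarith [hx.2], by linarith [hx.1]⟩, hA_eq, neg_neg],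
      fun x hx ↦ by rw [hQ2 _ ⟨hx.1.le, hx.2.le⟩, hB_eq]⟩
  refine ⟨⟨PB, hPB_deg, fun x ↦ by rw [hB_eq, hPB]⟩, ⟨PA, hPA_deg, fun x ↦ by rw [hA_eq, hPA]⟩,
    fun k hk ↦ integral_mul_pow_eq_zero_of_gluing hQ (by omega), ?_⟩
  rw [integral_mul_pow_two_mul_self_of_gluing hQ, ← mul_div_assoc 2, div_mul_eq_mul_div, ← hb_eq,
    div_self hb_pos.ne']
end

section
/- Characterization of the last Alpert multiwavelet f_n: let n ≥ 1 and suppose f: ℝ → ℝ vanishes outside [−1,1], there is a polynomial P of degree at most n−1 with f(x) = P(x) for all x ∈ (0,1), f(−x) = −f(x) for all x ∈ (0,1) (odd symmetry), ∫_{−1}^1 f(x)·x^i dx = 0 for all integers 0 ≤ i ≤ 2n−2, and ∫_{−1}^1 f(x)² dx = 1. Then there is a real constant c with P = c·p_{n−1} and 2·c²·∫₀¹ p_{n−1}(x)² dx = 1. -/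
open MeasureTheory intervalIntegral Polynomial

/-!
By oddness, the odd moments of `f` are twice those of `P` on `[0, 1]`, so the coefficients `a_k` of
`P` satisfy `∑_k a_k / (k + 2j + 2) = 0` for `0 ≤ j < n - 1`. In other words, the rational function
`∑_k a_k / (z + k)`, whose numerator has degree at most `n - 1`, vanishes at the `n - 1` points
`z = 2, 4, …, 2n - 2`. Its numerator is therefore `c ∏_j (z - (2j + 2))`, and the residue at
`z = -k` recovers `a_k` as a constant multiple of the `k`-th coefficient of `p_{n-1}`.
-/

section PartialFractions

open Finset Lagrange

variable {F ι κ : Type*} [Field F]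

theorem exists_eq_C_mul_nodal_of_eval_eq_zero {t : Finset κ} {w : κ → F} {N : F[X]}
    (hw : Set.InjOn w t) (hdeg : N.degree ≤ #t) (hroot : ∀ j ∈ t, N.eval (w j) = 0) :
    ∃ c, N = C c * nodal t w := by
  refine ⟨N.coeff #t, eq_of_degree_sub_lt_of_eval_index_eq _ hw ?_ fun j hj ↦ by
    rw [hroot j hj, eval_mul, eval_nodal_at_node hj, mul_zero]⟩
  have hmonic : (nodal t w).coeff #t = 1 := by
    simpa only [natDegree_nodal] using (nodal_monic (s := t) (v := w)).coeff_natDegree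
  refine (degree_lt_iff_coeff_zero _ _).2 fun k hk ↦ ?_
  rw [coeff_sub, coeff_C_mul]
  rcases hk.eq_or_lt with rfl | hk
  · rw [hmonic, mul_one, sub_self]
  · rw [coeff_eq_zero_of_degree_lt (hdeg.trans_lt (Nat.cast_lt.2 hk)),
      coeff_eq_zero_of_degree_lt (degree_nodal.trans_lt (Nat.cast_lt.2 hk)), mul_zero, sub_self]

theorem exists_eq_mul_eval_nodal_of_sum_div_sub_eq_zero [DecidableEq ι] {s : Finset ι}
    {t : Finset κ} {v : ι → F} {w : κ → F} {a : ι → F} (hv : Set.InjOn v s) (hw : Set.InjOn w t)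
    (hcard : #s ≤ #t + 1) (hwv : ∀ j ∈ t, ∀ i ∈ s, w j ≠ v i)
    (ha : ∀ j ∈ t, ∑ i ∈ s, a i / (w j - v i) = 0) :
    ∃ c, ∀ i ∈ s, a i = c * (nodalWeight s v i * (nodal t w).eval (v i)) := by
  -- By the barycentric formula, `N / nodal s v` is the rational function `∑ a i / (z - v i)`.
  set N := interpolate s v fun i ↦ a i / nodalWeight s v i with hN
  have hdeg : N.degree ≤ #t :=
    (degree_interpolate_le _ hv).trans (Nat.cast_le.2 (by omega))
  have hroot : ∀ j ∈ t, N.eval (w j) = 0 := fun j hj ↦ by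
    rw [hN, eval_interpolate_not_at_node _ (hwv j hj), ← mul_zero, ← ha j hj]
    congr 1
    refine sum_congr rfl fun i hi ↦ ?_
    have := nodalWeight_ne_zero hv hi
    field_simp
  obtain ⟨c, hc⟩ := exists_eq_C_mul_nodal_of_eval_eq_zero hw hdeg hroot
  refine ⟨c, fun i hi ↦ ?_⟩
  have hnode : a i / nodalWeight s v i = c * (nodal t w).eval (v i) := by
    rw [← eval_interpolate_at_node (fun i ↦ a i / nodalWeight s v i) hv hi, ← hN, hc, eval_mul,
      eval_C]
  rw [(div_eq_iff (nodalWeight_ne_zero hv hi)).1 hnode]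
  ring

end PartialFractions

section Nodes

open Finset Lagrange
open scoped Nat

theorem prod_range_natCast_sub (R : Type*) [CommRing R] (k : ℕ) :
    ∏ l ∈ range k, ((l : R) - k) = (-1) ^ k * k ! := by
  calc ∏ l ∈ range k, ((l : R) - k)
      = (-1) ^ k * ∏ l ∈ range k, ((k : R) - l) := by
        simp_rw [← neg_sub (k : R), prod_neg, card_range]
    _ = (-1) ^ k * k ! := by
        rw [← descPochhammer_eval_eq_prod_range, descPochhammer_eval_eq_descFactorial,
          Nat.descFactorial_self]

theorem prod_range_erase_natCast_sub_s16 (R : Type*) [CommRing R] (k r : ℕ) :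
    ∏ l ∈ (range (k + r + 1)).erase k, ((l : R) - k) = (-1) ^ k * k ! * r ! := by
  induction r with
  | zero =>
    have hset : (range (k + 0 + 1)).erase k = range k := by grind
    rw [hset, prod_range_natCast_sub, Nat.factorial_zero, Nat.cast_one, mul_one]
  | succ r ih =>
    have hset : (range (k + (r + 1) + 1)).erase k
        = insert (k + r + 1) ((range (k + r + 1)).erase k) := by grind
    rw [hset, prod_insert (by simp), ih, Nat.factorial_succ]
    push_cast
    ring

theorem nodalWeight_range_neg_natCast_s16 (F : Type*) [Field F] [CharZero F] {m k : ℕ} (hk : k ≤ m) :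
    nodalWeight (range (m + 1)) (fun l ↦ -(l : F)) k = (-1) ^ k * (m.choose k / m !) := by
  obtain ⟨r, rfl⟩ := Nat.exists_eq_add_of_le hk
  have hweight : nodalWeight (range (k + r + 1)) (fun l ↦ -(l : F)) k
      = ((-1) ^ k * k ! * r ! : F)⁻¹ := by
    simp_rw [nodalWeight, prod_inv_distrib, neg_sub_neg, prod_range_erase_natCast_sub_s16]
  have hfact (i : ℕ) : (i ! : F) ≠ 0 := Nat.cast_ne_zero.2 i.factorial_ne_zero
  rw [hweight, Nat.cast_choose F hk, Nat.add_sub_cancel_left]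
  field_simp [hfact]
  rw [pow_right_comm, neg_one_sq, one_pow]

theorem poch_eq_prod_range (a : ℝ) (m : ℕ) : poch a m = ∏ j ∈ range m, (a + j) := by
  rw [poch]
  induction m with
  | zero => simp
  | succ m ih => rw [ascPochhammer_succ_eval, ih, prod_range_succ]

theorem eval_nodal_range_two_mul_add_two (m : ℕ) (x : ℝ) :
    (nodal (range m) fun j ↦ 2 * (j : ℝ) + 2).eval x = (-2) ^ m * poch (-x / 2 + 1) m := by
  rw [eval_nodal, poch_eq_prod_range, ← card_range m, ← prod_const, card_range,
    ← prod_mul_distrib]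
  exact prod_congr rfl fun j _ ↦ by ring

theorem nodalWeight_mul_eval_nodal_range {m k : ℕ} (hk : k ≤ m) :
    nodalWeight (range (m + 1)) (fun l ↦ -(l : ℝ)) k *
        (nodal (range m) fun j ↦ 2 * (j : ℝ) + 2).eval (-(k : ℝ)) =
      2 ^ m * (m.choose k * (poch ((k : ℝ) / 2 + 1) m / m !) * (-1) ^ (m - k)) := by
  have hsign : (-1 : ℝ) ^ k * (-2) ^ m = 2 ^ m * (-1) ^ (m - k) := by
    obtain ⟨r, rfl⟩ := Nat.exists_eq_add_of_le hk
    rw [neg_pow (2 : ℝ), pow_add (-1 : ℝ), Nat.add_sub_cancel_left]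
    have hsq : (-1 : ℝ) ^ k * (-1) ^ k = 1 := pow_mul_pow_eq_one k (by norm_num)
    linear_combination 2 ^ (k + r) * (-1) ^ r * hsq
  rw [nodalWeight_range_neg_natCast_s16 ℝ hk, eval_nodal_range_two_mul_add_two, neg_neg]
  linear_combination (m.choose k / m ! * poch ((k : ℝ) / 2 + 1) m) * hsign

end Nodes

section Moments

open Finset

theorem integral_eval_mul_pow {P : ℝ[X]} {d : ℕ} (hP : P.natDegree < d) (i : ℕ) :
    ∫ x in (0 : ℝ)..1, P.eval x * x ^ i = ∑ k ∈ range d, P.coeff k / ((k : ℝ) + i + 1) := by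
  simp_rw [eval_eq_sum_range' hP, sum_mul, mul_assoc, ← pow_add]
  rw [intervalIntegral.integral_finsetSum
    fun k _ ↦ Continuous.intervalIntegrable (by fun_prop) _ _]
  refine sum_congr rfl fun k _ ↦ ?_
  rw [intervalIntegral.integral_const_mul, integral_pow]
  simp [div_eq_mul_inv]

theorem exists_eval_eq_mul_pAlp {P : ℝ[X]} {m : ℕ} (hP : P.natDegree ≤ m)
    (hmom : ∀ j < m, ∫ x in (0 : ℝ)..1, P.eval x * x ^ (2 * j + 1) = 0) :
    ∃ c, ∀ x, P.eval x = c * pAlp m x := by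
  have hsum : ∀ j ∈ range m,
      ∑ k ∈ range (m + 1), P.coeff k / ((2 * (j : ℝ) + 2) - -(k : ℝ)) = 0 := fun j hj ↦ by
    rw [← hmom j (mem_range.1 hj), integral_eval_mul_pow (Nat.lt_succ_of_le hP)]
    refine sum_congr rfl fun k _ ↦ ?_
    push_cast
    ring
  have hne (j k : ℕ) : 2 * (j : ℝ) + 2 ≠ -(k : ℝ) :=
    ((neg_nonpos.2 k.cast_nonneg).trans_lt (by positivity)).ne'
  obtain ⟨c, hc⟩ := exists_eq_mul_eval_nodal_of_sum_div_sub_eq_zero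
    (v := fun k : ℕ ↦ -(k : ℝ)) (w := fun j : ℕ ↦ 2 * (j : ℝ) + 2)
    (fun k _ l _ h ↦ by simpa using h) (fun i _ j _ h ↦ by simpa using h) (by simp)
    (fun j _ k _ ↦ hne j k) hsum
  refine ⟨c * 2 ^ m, fun x ↦ ?_⟩
  rw [eval_eq_sum_range' (Nat.lt_succ_of_le hP), pAlp, mul_sum]
  refine sum_congr rfl fun k hk ↦ ?_
  rw [hc k hk, nodalWeight_mul_eval_nodal_range (Nat.lt_succ_iff.1 (mem_range.1 hk))]
  ring

end Moments

theorem integral_neg_self_eq_two_nsmul_of_even {E : Type*} [NormedAddCommGroup E] [NormedSpace ℝ E]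
    {g : ℝ → E} {b : ℝ} (hg : ∀ x ∈ Set.uIoo 0 b, g (-x) = g x) :
    ∫ x in -b..b, g x = 2 • ∫ x in (0 : ℝ)..b, g x := by
  -- If `g` is not integrable, both integrals are zero by convention.
  by_cases hg_int : IntervalIntegrable g volume 0 b
  · have hg_int_neg : IntervalIntegrable g volume (-b) 0 := by
      rw [IntervalIntegrable.iff_comp_neg, neg_neg, neg_zero]
      exact (hg_int.congr_uIoo fun x hx ↦ (hg x hx).symm).symm
    have hreflect : ∫ x in -b..0, g x = ∫ x in (0 : ℝ)..b, g x := by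
      rw [← integral_congr_uIoo hg, intervalIntegral.integral_comp_neg, neg_zero]
    rw [← integral_add_adjacent_intervals hg_int_neg hg_int, hreflect, two_nsmul]
  · have hsub : Set.uIcc 0 b ⊆ Set.uIcc (-b) b :=
      Set.uIcc_subset_uIcc_right (by rcases le_total 0 b with h | h <;> simp [h])
    rw [integral_undef hg_int, integral_undef fun h ↦ hg_int (h.mono_set hsub), smul_zero]

/-- Characterization of the last Alpert multiwavelet `f_n`: any function supported on `[-1,1]`
that is a polynomial of degree `≤ n-1` on `(0,1)`, odd, with vanishing moments of order
`≤ 2n-2` and unit `L²`-norm, is proportional to `p_{n-1}` on `(0,1)`, with the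
normalization `2 c² ∫₀¹ p_{n-1}² = 1`. -/
theorem alpert_last (n : ℕ) (hn : 1 ≤ n) (f : ℝ → ℝ) (P : Polynomial ℝ)
    (hPdeg : P.degree ≤ ((n - 1 : ℕ) : WithBot ℕ))
    (hsupp : ∀ x, x ∉ Set.Icc (-1 : ℝ) 1 → f x = 0)
    (hfP : ∀ x ∈ Set.Ioo (0 : ℝ) 1, f x = P.eval x)
    (hodd : ∀ x ∈ Set.Ioo (0 : ℝ) 1, f (-x) = -f x)
    (hmom : ∀ i : ℕ, i ≤ 2 * n - 2 → ∫ x in (-1 : ℝ)..1, f x * x ^ i = 0)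
    (hnorm : ∫ x in (-1 : ℝ)..1, (f x) ^ 2 = 1) :
    ∃ c : ℝ, (∀ x, P.eval x = c * pAlp (n - 1) x) ∧
      2 * c ^ 2 * ∫ x in (0 : ℝ)..1, (pAlp (n - 1) x) ^ 2 = 1 := by
  have hmoment : ∀ j : ℕ, ∫ x in (-1 : ℝ)..1, f x * x ^ (2 * j + 1) =
      2 • ∫ x in (0 : ℝ)..1, P.eval x * x ^ (2 * j + 1) := fun j ↦ by
    rw [integral_neg_self_eq_two_nsmul_of_even fun x hx ↦ ?_]
    · exact congrArg (2 • ·) <| integral_congr_Ioo_of_le zero_le_one fun x hx ↦ by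
        simp only [hfP x hx]
    · rw [hodd x (by simpa using hx), (odd_two_mul_add_one j).neg_pow, neg_mul_neg]
  have hsq : ∫ x in (-1 : ℝ)..1, f x ^ 2 = 2 • ∫ x in (0 : ℝ)..1, P.eval x ^ 2 := by
    rw [integral_neg_self_eq_two_nsmul_of_even fun x hx ↦ ?_]
    · exact congrArg (2 • ·) <| integral_congr_Ioo_of_le zero_le_one fun x hx ↦ by
        simp only [hfP x hx]
    · rw [hodd x (by simpa using hx), neg_sq]
  obtain ⟨c, hc⟩ := exists_eval_eq_mul_pAlp (natDegree_le_iff_degree_le.2 hPdeg) fun j hj ↦ by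
    simpa using (hmoment j).symm.trans (hmom (2 * j + 1) (by omega))
  refine ⟨c, hc, ?_⟩
  calc 2 * c ^ 2 * ∫ x in (0 : ℝ)..1, pAlp (n - 1) x ^ 2
      = 2 • ∫ x in (0 : ℝ)..1, P.eval x ^ 2 := by
        simp_rw [hc, mul_pow, intervalIntegral.integral_const_mul, nsmul_eq_mul, mul_assoc,
          Nat.cast_ofNat]
    _ = 1 := hsq.symm.trans hnorm
end

section
/- Orthogonality of the explicit diagonal type II Legendre-Angelesco polynomial: for every natural number n, the even polynomial P(x) = ∑_{k=0}^n (n choose k) · (n+2k choose 2k) · (−1)^{n−k} · x^{2k} has leading coefficient (3n)!/(n!·(2n)!) (so that (n!·(2n)!/(3n)!)·P is monic of degree 2n) and satisfies ∫₀¹ P(x)·x^k dx = 0 and ∫_{−1}^0 P(x)·x^k dx = 0 for every integer k with 0 ≤ k ≤ n−1. -/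
open MeasureTheory intervalIntegral Polynomial

/-!
The polynomial is given by a Rodrigues formula: it is `1 / n!` times the `n`-th derivative of
`(X ^ 3 - X) ^ n`. Since `(X ^ 3 - X) ^ n` vanishes to order `n` at each of `-1`, `0` and `1`,
integrating by parts `n` times over `[-1, 0]` or `[0, 1]` moves all derivatives onto `x ^ k`
without boundary terms, and the `n`-th derivative of `x ^ k` is zero for `k < n`.
-/

lemma coeff_hasseDeriv_pow_of_natDegree_eq {R : Type*} [Semiring R] {q : R[X]} {d : ℕ}
    (hd : q.natDegree = d + 1) (n : ℕ) :
    (hasseDeriv n (q ^ n)).coeff (d * n) = (n + d * n).choose n * q.leadingCoeff ^ n := by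
  have top_index : d * n + n = n * q.natDegree := by rw [hd]; ring
  rw [hasseDeriv_coeff, ← coeff_pow_mul_natDegree, ← top_index, add_comm n]

lemma hasseDeriv_X_pow_succ_sub_X_pow_eq_sum {R : Type*} [CommRing R] (d n : ℕ) :
    hasseDeriv n ((X ^ (d + 1) - X : R[X]) ^ n) =
      ∑ k ∈ Finset.range (n + 1),
        C ((n.choose k : R) * ((n + d * k).choose (d * k) : R) * (-1) ^ (n - k)) *
          X ^ (d * k) := by
  have expansion : (X ^ (d + 1) - X : R[X]) ^ n =
      ∑ k ∈ Finset.range (n + 1), monomial (d * k + n) ((-1) ^ (n - k) * (n.choose k : R)) := by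
    calc (X ^ (d + 1) - X : R[X]) ^ n = X ^ n * (X ^ d + -1) ^ n := by
          rw [← mul_pow]; ring
      _ = _ := by
          rw [add_pow, Finset.mul_sum]
          refine Finset.sum_congr rfl fun k _ ↦ ?_
          rw [← C_mul_X_pow_eq_monomial]
          simp only [map_mul, map_pow, map_neg, map_one, map_natCast]
          ring
  rw [expansion, map_sum]
  refine Finset.sum_congr rfl fun k _ ↦ ?_
  rw [hasseDeriv_monomial, Nat.add_sub_cancel, C_mul_X_pow_eq_monomial, ← Nat.choose_symm_add,
    add_comm n]
  ring_nf

lemma isRoot_iterate_derivative_of_pow_succ_dvd {R : Type*} [CommRing R] {r : R} {n : ℕ}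
    {F : R[X]} (h : (X - C r) ^ (n + 1) ∣ F) : (derivative^[n] F).IsRoot r := by
  rw [← dvd_iff_isRoot]
  simpa using pow_sub_dvd_iterate_derivative_of_pow_dvd n h

lemma integral_eval_derivative_mul_of_isRoot {a b : ℝ} {F : ℝ[X]} (ha : F.IsRoot a)
    (hb : F.IsRoot b) (g : ℝ[X]) :
    ∫ x in a..b, (derivative F).eval x * g.eval x =
      -∫ x in a..b, F.eval x * (derivative g).eval x := by
  have by_parts := integral_mul_deriv_eq_deriv_mul (a := a) (b := b)
    (fun x _ ↦ F.hasDerivAt x) (fun x _ ↦ g.hasDerivAt x)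
    ((derivative F).continuous.intervalIntegrable a b)
    ((derivative g).continuous.intervalIntegrable a b)
  rw [ha.eq_zero, hb.eq_zero] at by_parts
  linarith

lemma integral_eval_iterate_derivative_mul_of_pow_dvd {a b : ℝ} {n : ℕ} {F : ℝ[X]}
    (ha : (X - C a) ^ n ∣ F) (hb : (X - C b) ^ n ∣ F) (g : ℝ[X]) :
    ∫ x in a..b, (derivative^[n] F).eval x * g.eval x =
      (-1) ^ n * ∫ x in a..b, F.eval x * (derivative^[n] g).eval x := by
  induction n generalizing g with
  | zero => simp
  | succ n ih =>
    rw [Function.iterate_succ_apply', Function.iterate_succ_apply,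
      integral_eval_derivative_mul_of_isRoot (isRoot_iterate_derivative_of_pow_succ_dvd ha)
        (isRoot_iterate_derivative_of_pow_succ_dvd hb),
      ih ((pow_dvd_pow _ n.le_succ).trans ha) ((pow_dvd_pow _ n.le_succ).trans hb)]
    ring

lemma integral_eval_hasseDeriv_pow_mul_eq_zero {a b : ℝ} {q : ℝ[X]} (ha : q.IsRoot a)
    (hb : q.IsRoot b) {n : ℕ} {g : ℝ[X]} (hg : g.degree < n) :
    ∫ x in a..b, (hasseDeriv n (q ^ n)).eval x * g.eval x = 0 := by
  have pow_dvd {r : ℝ} (hr : q.IsRoot r) : (X - C r) ^ n ∣ q ^ n :=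
    pow_dvd_pow_of_dvd (dvd_iff_isRoot.mpr hr) n
  have iterate_orthogonal : ∫ x in a..b, (derivative^[n] (q ^ n)).eval x * g.eval x = 0 := by
    rw [integral_eval_iterate_derivative_mul_of_pow_dvd (pow_dvd ha) (pow_dvd hb),
      iterate_derivative_eq_zero_of_degree_lt hg]
    simp
  simp_rw [← factorial_smul_hasseDeriv, LinearMap.smul_apply, eval_smul, smul_mul_assoc,
    nsmul_eq_mul, intervalIntegral.integral_const_mul] at iterate_orthogonal
  exact (mul_eq_zero.mp iterate_orthogonal).resolve_left (by positivity)

/-- Orthogonality of the explicit diagonal type II Legendre-Angelesco polynomial: the even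
polynomial `P(x) = ∑_{k=0}^n (n choose k)(n+2k choose 2k)(-1)^{n-k} x^{2k}` has leading
coefficient `(3n)!/(n!(2n)!)` and is orthogonal on `[0,1]` and on `[-1,0]` to all powers
`x^k` with `k ≤ n-1`. -/
theorem typeII_diagonal_orthogonality (n : ℕ) (P : Polynomial ℝ)
    (hP : P = ∑ k ∈ Finset.range (n + 1),
      Polynomial.C ((n.choose k : ℝ) * ((n + 2 * k).choose (2 * k) : ℝ) * (-1) ^ (n - k)) *
        Polynomial.X ^ (2 * k)) :
    P.coeff (2 * n) = ((3 * n).factorial : ℝ) / ((n.factorial : ℝ) * ((2 * n).factorial : ℝ)) ∧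
    ∀ k : ℕ, k < n →
      (∫ x in (0 : ℝ)..1, P.eval x * x ^ k = 0) ∧
      (∫ x in (-1 : ℝ)..0, P.eval x * x ^ k = 0) := by
  rw [← hasseDeriv_X_pow_succ_sub_X_pow_eq_sum 2 n] at hP
  subst hP
  have hdeg : (X ^ (2 + 1) - X : ℝ[X]).natDegree = 2 + 1 := by compute_degree!
  have hlead : (X ^ (2 + 1) - X : ℝ[X]).leadingCoeff = 1 := by monicity!
  refine ⟨?_, fun k hk ↦ ?_⟩
  · rw [coeff_hasseDeriv_pow_of_natDegree_eq hdeg, hlead, one_pow, mul_one, Nat.cast_add_choose,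
      show n + 2 * n = 3 * n by ring]
  · have hXk : (X ^ k : ℝ[X]).degree < n := by simpa using hk
    have orthogonal {a b : ℝ} (ha : (X ^ (2 + 1) - X : ℝ[X]).IsRoot a)
        (hb : (X ^ (2 + 1) - X : ℝ[X]).IsRoot b) :
        ∫ x in a..b, (hasseDeriv n ((X ^ (2 + 1) - X : ℝ[X]) ^ n)).eval x * x ^ k = 0 := by
      simpa using integral_eval_hasseDeriv_pow_mul_eq_zero ha hb hXk
    exact ⟨orthogonal (by simp) (by simp), orthogonal (by norm_num) (by simp)⟩
end
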